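/- arXiv:1207.1232 — 2 statements merged into one kernel-verified Lean document; each statement's English description precedes it below -/
import Mathlib

section
/- Let φ be a Schur function with φ(0) = 0 and φ ∈ 𝒟_*. Then C_φ is a Hilbert–Schmidt operator on 𝒟_* if and only if ∫_D |φ′(z)|² / (1 − |φ(z)|²)² dA(z) < ∞ (in particular, this integral condition already implies that C_φ is bounded on 𝒟_*). -/
/-!
For `φ(0) = 0`, the function `C_φ(zⁿ/√n) = φⁿ/√n` has squared Dirichlet norm
`∫_D n |φ|^(2n-2) |φ'|² dA`. Summing over `n ≥ 1` under the integral and using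
`∑ n x^(n-1) = 1 / (1 - x)²` shows that the Hilbert–Schmidt sum is exactly
`I = ∫_D |φ'|² / (1 - |φ|²)² dA` (`tsum_eDNormSq_eq`).

It remains to deduce boundedness of `C_φ` from `I < ∞`. The area mean value inequality for `(f')²`
on the disk of radius `1 - |w|` about `w` gives `|f'(w)|² ≤ 4 ‖f‖² / (1 - |w|²)²`
(`deriv_sq_le`); inserting `w = φ(z)` into `|(f ∘ φ)'|² = |f' ∘ φ|² |φ'|²` and integrating yields
`‖f ∘ φ‖² ≤ 4 I ‖f‖²` (`eDNormSq_comp_le`).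
-/

open Complex MeasureTheory Metric Set Filter Topology
open scoped ENNReal NNReal

noncomputable section

/-- Normalized area measure `dA = dx dy / π` on `ℂ`. -/
def nA : Measure ℂ := (ENNReal.ofReal Real.pi)⁻¹ • volume

/-- The open unit disk `D ⊆ ℂ`. -/
def uD : Set ℂ := Metric.ball (0 : ℂ) 1

/-- A Schur function: an analytic self-map of the open unit disk. -/
def IsSchur (φ : ℂ → ℂ) : Prop :=
  DifferentiableOn ℂ φ uD ∧ Set.MapsTo φ uD uD

/-- Squared norm of `f` in the weighted Dirichlet space `𝒟_α`, with value in `[0,∞]`: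
`‖f‖_α² = |f(0)|² + (α+1) ∫_D |f′(z)|² (1−|z|²)^α dA(z)`. -/
def eDNormSqW (α : ℝ) (f : ℂ → ℂ) : ℝ≥0∞ :=
  ENNReal.ofReal (‖f 0‖ ^ 2) +
    ∫⁻ z in uD, ENNReal.ofReal ((α + 1) * ‖deriv f z‖ ^ 2 * (1 - ‖z‖ ^ 2) ^ α) ∂nA

/-- Squared Dirichlet norm: `‖f‖² = |f(0)|² + ∫_D |f′(z)|² dA(z)`. -/
def eDNormSq (f : ℂ → ℂ) : ℝ≥0∞ := eDNormSqW 0 f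

/-- Membership in the weighted Dirichlet space `𝒟_α`. -/
def MemDW (α : ℝ) (f : ℂ → ℂ) : Prop :=
  DifferentiableOn ℂ f uD ∧ eDNormSqW α f < ⊤

/-- Membership in `𝒟_{α,*}`. -/
def MemDWStar (α : ℝ) (f : ℂ → ℂ) : Prop := MemDW α f ∧ f 0 = 0

/-- Membership in the Dirichlet space `𝒟`. -/
def MemD (f : ℂ → ℂ) : Prop := MemDW 0 f

/-- Membership in `𝒟_*`. -/
def MemDStar (f : ℂ → ℂ) : Prop := MemDWStar 0 f

/-- The composition operator `C_φ f = f ∘ φ`. -/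
def compOp (φ : ℂ → ℂ) : (ℂ → ℂ) → ℂ → ℂ := fun f z => f (φ z)

/-- Operator norm of `T` with respect to the space `{f | Mem f}` with squared norm `NSq`:
the least `C` such that `‖T f‖² ≤ C² ‖f‖²` for all `f` in the space (`⊤` if none). -/
def eOpNorm (Mem : (ℂ → ℂ) → Prop) (NSq : (ℂ → ℂ) → ℝ≥0∞)
    (T : (ℂ → ℂ) → ℂ → ℂ) : ℝ≥0∞ :=
  sInf {C : ℝ≥0∞ | ∀ f, Mem f → NSq (T f) ≤ C ^ 2 * NSq f}

/-- The `n`-th approximation number `a_n(T) = inf {‖T − R‖ : rank R < n}`. -/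
def eApproxNum (Mem : (ℂ → ℂ) → Prop) (NSq : (ℂ → ℂ) → ℝ≥0∞)
    (T : (ℂ → ℂ) → ℂ → ℂ) (n : ℕ) : ℝ≥0∞ :=
  sInf {c : ℝ≥0∞ | ∃ R : (ℂ → ℂ) →ₗ[ℂ] (ℂ → ℂ),
    Module.rank ℂ (LinearMap.range R) < (n : Cardinal) ∧
    c = eOpNorm Mem NSq (fun f z => T f z - R f z)}

/-- `T` is a bounded operator on the space `{f | Mem f}` with squared norm `NSq`. -/
def IsBoundedOpOn (Mem : (ℂ → ℂ) → Prop) (NSq : (ℂ → ℂ) → ℝ≥0∞)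
    (T : (ℂ → ℂ) → ℂ → ℂ) : Prop :=
  (∀ f, Mem f → Mem (T f)) ∧ eOpNorm Mem NSq T ≠ ⊤

/-- `T` is a compact operator on the space `{f | Mem f}`: it is bounded and its
approximation numbers tend to `0` (the standard characterization of compactness
for operators on a Hilbert space). -/
def IsCompactOpOn (Mem : (ℂ → ℂ) → Prop) (NSq : (ℂ → ℂ) → ℝ≥0∞)
    (T : (ℂ → ℂ) → ℂ → ℂ) : Prop :=
  IsBoundedOpOn Mem NSq T ∧
    Filter.Tendsto (fun n => eApproxNum Mem NSq T n) Filter.atTop (𝓝 0)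

/-- `T` belongs to the Schatten class `S_p` of the space `{f | Mem f}`:
`Σ_{n≥1} a_n(T)^p < ∞`. -/
def MemSchattenOn (Mem : (ℂ → ℂ) → Prop) (NSq : (ℂ → ℂ) → ℝ≥0∞)
    (T : (ℂ → ℂ) → ℂ → ℂ) (p : ℝ) : Prop :=
  IsBoundedOpOn Mem NSq T ∧
    ∑' n : ℕ, (eApproxNum Mem NSq T (n + 1)) ^ p ≠ ⊤

/-- `C_φ` belongs to the Schatten class `S_p(𝒟_*)`. -/
def MemSchattenD (p : ℝ) (φ : ℂ → ℂ) : Prop :=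
  MemSchattenOn MemDStar eDNormSq (compOp φ) p

/-- `C_φ` is a Hilbert–Schmidt operator on `𝒟_*`: it is bounded and
`Σ_n ‖C_φ e_n‖² < ∞` for the orthonormal basis `e_n(z) = zⁿ/√n`, `n ≥ 1`, of `𝒟_*`
(equivalently, for every orthonormal basis). -/
def HilbertSchmidtOnDStar (φ : ℂ → ℂ) : Prop :=
  IsBoundedOpOn MemDStar eDNormSq (compOp φ) ∧
    ∑' n : ℕ, eDNormSq (fun z => φ z ^ (n + 1) / (Real.sqrt (n + 1) : ℂ)) ≠ ⊤

/-- Squared Hardy norm `‖f‖² = sup_{0≤r<1} (1/2π) ∫_0^{2π} |f(r e^{it})|² dt`. -/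
def eHardyNormSq (f : ℂ → ℂ) : ℝ≥0∞ :=
  ⨆ r : Set.Ico (0 : ℝ) 1,
    (∫⁻ t in Set.Ioc 0 (2 * Real.pi),
      ENNReal.ofReal (‖f ((r : ℝ) * Complex.exp (t * Complex.I))‖ ^ 2)) /
        ENNReal.ofReal (2 * Real.pi)

/-- Membership in the Hardy space `H²`. -/
def MemHardy (f : ℂ → ℂ) : Prop := DifferentiableOn ℂ f uD ∧ eHardyNormSq f < ⊤

/-- Squared Bergman norm `‖f‖² = ∫_D |f|² dA`. -/
def eBergNormSq (f : ℂ → ℂ) : ℝ≥0∞ := ∫⁻ z in uD, ENNReal.ofReal (‖f z‖ ^ 2) ∂nA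

/-- Membership in the Bergman space `𝔅²`. -/
def MemBerg (f : ℂ → ℂ) : Prop := DifferentiableOn ℂ f uD ∧ eBergNormSq f < ⊤

/-- The logarithmic energy `I_μ = ∬ log(e/|z−w|) dμ(z) dμ(w)` of a measure on the circle. -/
def eEnergy (μ : Measure ℂ) : ℝ≥0∞ :=
  ∫⁻ z, ∫⁻ w, ENNReal.ofReal (Real.log (Real.exp 1 / dist z w)) ∂μ ∂μ

/-- A Borel set `E` (contained in the unit circle) has logarithmic capacity zero iff
`I_μ = ∞` for every Borel probability measure `μ` with compact support contained in `E`. -/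
def HasLogCapacityZero (E : Set ℂ) : Prop :=
  ∀ μ : Measure ℂ, IsProbabilityMeasure μ →
    (∃ K, IsCompact K ∧ K ⊆ E ∧ μ Kᶜ = 0) → eEnergy μ = ⊤

/-- The weighted Nevanlinna counting function `N_{φ,α}(w) = Σ_{z∈D, φ(z)=w} (1−|z|²)^α`. -/
def nevanlinnaE (φ : ℂ → ℂ) (α : ℝ) (w : ℂ) : ℝ≥0∞ :=
  ∑' z : {z : ℂ // z ∈ uD ∧ φ z = w}, ENNReal.ofReal ((1 - ‖(z : ℂ)‖ ^ 2) ^ α)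

/-- The Carleson window `W(ξ,h)`. -/
def carlesonW (ξ : ℂ) (h : ℝ) : Set ℂ :=
  {w ∈ uD | 1 - ‖w‖ ≤ h ∧ |Complex.arg (w * (starRingEnd ℂ) ξ)| ≤ Real.pi * h}

/-- Argument normalized to lie in `[0, 2π)`. -/
def argNN (z : ℂ) : ℝ :=
  if 0 ≤ Complex.arg z then Complex.arg z else Complex.arg z + 2 * Real.pi

/-- The Hastings–Luecking window `R_{n,j}`. -/
def HLwindow (n j : ℕ) : Set ℂ :=
  {z ∈ uD | 1 - ((2 : ℝ) ^ n)⁻¹ ≤ ‖z‖ ∧ ‖z‖ < 1 - ((2 : ℝ) ^ (n + 1))⁻¹ ∧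
    2 * j * Real.pi / 2 ^ n ≤ argNN z ∧ argNN z < 2 * (j + 1) * Real.pi / 2 ^ n}

/-- `g` is an a.e. radial limit function of `φ`:
for a.e. `t`, `φ(r e^{it}) → g(t)` as `r → 1⁻`. -/
def IsRadialLimit (φ : ℂ → ℂ) (g : ℝ → ℂ) : Prop :=
  ∀ᵐ t : ℝ, Filter.Tendsto (fun r : ℝ => φ ((r : ℂ) * Complex.exp (t * Complex.I)))
    (𝓝[<] (1 : ℝ)) (𝓝 (g t))

/-- The mean value inequality on a circle, with the circle parametrized as in polar coordinates. -/
lemma enorm_center_le_circle {G : ℂ → ℂ} {r ρ : ℝ} (hG : DifferentiableOn ℂ G (ball 0 r))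
    (hρ : 0 < ρ) (hρr : ρ < r) :
    ‖G 0‖ₑ * ENNReal.ofReal (2 * Real.pi) ≤
      ∫⁻ θ in Ioo (-Real.pi) Real.pi, ‖G (Complex.polarCoord.symm (ρ, θ))‖ₑ := by
  have hd : DiffContOnCl ℂ G (ball 0 |ρ|) := by
    rw [abs_of_pos hρ]
    exact hG.diffContOnCl_ball (closedBall_subset_ball hρr)
  have h := hd.circleAverage
  rw [Real.circleAverage_eq_integral_add (-Real.pi),
    intervalIntegral.integral_comp_add_right (fun θ => G (circleMap 0 ρ θ))] at h
  have h2 : (2 * Real.pi) • G 0 = ∫ θ in (-Real.pi)..Real.pi, G (circleMap 0 ρ θ) := by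
    rw [← h, smul_smul, mul_inv_cancel₀ (by positivity), one_smul]
    congr 1 <;> ring
  have h3 : ‖G 0‖ₑ * ENNReal.ofReal (2 * Real.pi) = ‖(2 * Real.pi) • G 0‖ₑ := by
    rw [enorm_smul, mul_comm, Real.enorm_eq_ofReal (by positivity)]
  rw [h3, h2, intervalIntegral.integral_of_le (by linarith [Real.pi_pos]),
    integral_Ioc_eq_integral_Ioo]
  refine (enorm_integral_le_lintegral_enorm _).trans (le_of_eq ?_)
  refine lintegral_congr fun θ => ?_
  simp [circleMap, Complex.exp_mul_I]

/-- The area mean value inequality on a disk, obtained by integrating `enorm_center_le_circle`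
over the radius. -/
lemma enorm_center_mul_volume_le {G : ℂ → ℂ} {r : ℝ} (hGm : Measurable G)
    (hG : DifferentiableOn ℂ G (ball 0 r)) :
    ‖G 0‖ₑ * volume (ball (0 : ℂ) r) ≤ ∫⁻ z in ball 0 r, ‖G z‖ₑ := by
  have hb : MeasurableSet (ball (0 : ℂ) r) := measurableSet_ball
  have hsymm : Measurable fun p : ℝ × ℝ => Complex.polarCoord.symm p := by
    simp only [Complex.polarCoord_symm_apply]
    fun_prop
  rw [← setLIntegral_const, ← lintegral_indicator hb, ← lintegral_indicator hb,
    ← Complex.lintegral_comp_polarCoord_symm, ← Complex.lintegral_comp_polarCoord_symm]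
  simp only [polarCoord_target, smul_eq_mul]
  rw [Measure.volume_eq_prod, setLIntegral_prod, setLIntegral_prod]
  rotate_left
  · exact (measurable_fst.ennreal_ofReal.mul
      ((hGm.enorm.indicator hb).comp hsymm)).aemeasurable
  · exact (measurable_fst.ennreal_ofReal.mul
      ((measurable_const.indicator hb).comp hsymm)).aemeasurable
  refine setLIntegral_mono' measurableSet_Ioi fun ρ hρ => ?_
  have hρ : 0 < ρ := hρ
  have hmem : ∀ θ : ℝ, Complex.polarCoord.symm (ρ, θ) ∈ ball (0 : ℂ) r ↔ ρ < r := fun θ => by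
    rw [mem_ball_zero_iff, Complex.norm_polarCoord_symm, abs_of_pos hρ]
  by_cases hρr : ρ < r
  · simp only [indicator_of_mem ((hmem _).2 hρr)]
    rw [lintegral_const_mul' _ _ ENNReal.ofReal_ne_top,
      lintegral_const_mul' _ _ ENNReal.ofReal_ne_top, setLIntegral_const, Real.volume_Ioo]
    gcongr
    have := enorm_center_le_circle hG hρ hρr
    rwa [show Real.pi - -Real.pi = 2 * Real.pi by ring]
  · simp only [indicator_of_notMem fun h => hρr ((hmem _).1 h), mul_zero, le_refl]

lemma eDNormSq_eq (f : ℂ → ℂ) :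
    eDNormSq f = ENNReal.ofReal (‖f 0‖ ^ 2) +
      ∫⁻ z in uD, ENNReal.ofReal (‖deriv f z‖ ^ 2) ∂nA := by
  simp [eDNormSq, eDNormSqW]

/-- Point evaluation of the derivative is bounded on the Dirichlet space: the area mean value
inequality applies to `(f')²` on the disk of radius `1 - |w|` about `w`, and
`(1 - |w|²)² ≤ 4 (1 - |w|)²`. -/
lemma deriv_sq_le {f : ℂ → ℂ} (hf : DifferentiableOn ℂ f uD) {w : ℂ} (hw : w ∈ uD) :
    ENNReal.ofReal (‖deriv f w‖ ^ 2) ≤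
      ENNReal.ofReal (4 / (1 - ‖w‖ ^ 2) ^ 2) * eDNormSq f := by
  have hw1 : ‖w‖ < 1 := by simpa [uD] using hw
  have hw0 := norm_nonneg w
  set r := 1 - ‖w‖ with hr
  have hr0 : 0 < r := by linarith
  have hsub : ∀ z ∈ ball (0 : ℂ) r, w + z ∈ uD := fun z hz => by
    have := norm_add_le w z
    simp only [uD, mem_ball_zero_iff] at hz ⊢
    linarith
  have hd : DifferentiableOn ℂ (deriv f) uD := hf.deriv isOpen_ball
  have hGd : DifferentiableOn ℂ (fun z => deriv f (w + z) ^ 2) (ball 0 r) :=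
    (hd.comp (by fun_prop) hsub).pow 2
  have hGm : Measurable (fun z => deriv f (w + z) ^ 2) :=
    ((measurable_deriv f).comp (measurable_const_add w)).pow_const 2
  have hmv := enorm_center_mul_volume_le hGm hGd
  have hle : (∫⁻ z in ball (0 : ℂ) r, ‖deriv f (w + z) ^ 2‖ₑ) ≤
      ∫⁻ z in uD, ENNReal.ofReal (‖deriv f z‖ ^ 2) := by
    have huD : MeasurableSet uD := measurableSet_ball
    rw [← lintegral_indicator measurableSet_ball, ← lintegral_indicator huD,
      ← lintegral_add_left_eq_self (uD.indicator _) w]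
    refine lintegral_mono fun z => ?_
    by_cases hz : z ∈ ball (0 : ℂ) r
    · rw [indicator_of_mem hz, indicator_of_mem (hsub z hz), ← ofReal_norm, norm_pow]
    · rw [indicator_of_notMem hz]
      exact zero_le
  have hpi0 : ENNReal.ofReal Real.pi ≠ 0 := by simp [Real.pi_pos]
  have hnA : (∫⁻ z in uD, ENNReal.ofReal (‖deriv f z‖ ^ 2)) =
      ENNReal.ofReal Real.pi * ∫⁻ z in uD, ENNReal.ofReal (‖deriv f z‖ ^ 2) ∂nA := by
    rw [nA, Measure.restrict_smul, lintegral_smul_measure, smul_eq_mul, ← mul_assoc,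
      ENNReal.mul_inv_cancel hpi0 ENNReal.ofReal_ne_top, one_mul]
  have hvol : volume (ball (0 : ℂ) r) = ENNReal.ofReal Real.pi * ENNReal.ofReal (r ^ 2) := by
    rw [Complex.volume_ball, mul_comm, ENNReal.ofReal_pow hr0.le]
    congr 1
    rw [← NNReal.coe_real_pi, ENNReal.ofReal_coe_nnreal]
  have hmain : ENNReal.ofReal (‖deriv f w‖ ^ 2) * ENNReal.ofReal (r ^ 2) ≤ eDNormSq f := by
    have h1 := hmv.trans hle
    rw [hnA, hvol, add_zero, ← ofReal_norm, norm_pow, mul_left_comm,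
      ENNReal.mul_le_mul_iff_right hpi0 ENNReal.ofReal_ne_top] at h1
    rw [eDNormSq_eq]
    exact h1.trans le_add_self
  have hpos : 0 < 1 - ‖w‖ ^ 2 := by nlinarith
  have hc : 1 ≤ 4 / (1 - ‖w‖ ^ 2) ^ 2 * r ^ 2 := by
    rw [div_mul_eq_mul_div, one_le_div (by positivity)]
    have : 1 - ‖w‖ ^ 2 ≤ 2 * r := by nlinarith
    nlinarith
  calc ENNReal.ofReal (‖deriv f w‖ ^ 2)
      ≤ ENNReal.ofReal (4 / (1 - ‖w‖ ^ 2) ^ 2 * r ^ 2 * ‖deriv f w‖ ^ 2) :=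
        ENNReal.ofReal_le_ofReal (le_mul_of_one_le_left (by positivity) hc)
    _ = ENNReal.ofReal (4 / (1 - ‖w‖ ^ 2) ^ 2) *
          (ENNReal.ofReal (‖deriv f w‖ ^ 2) * ENNReal.ofReal (r ^ 2)) := by
        rw [← ENNReal.ofReal_mul (by positivity), ← ENNReal.ofReal_mul (by positivity)]
        ring_nf
    _ ≤ _ := by gcongr

lemma eDNormSq_comp_le {φ f : ℂ → ℂ} (hφ : IsSchur φ) (h0 : φ 0 = 0)
    (hf : MemDStar f) :
    eDNormSq (compOp φ f) ≤
      4 * (∫⁻ z in uD, ENNReal.ofReal (‖deriv φ z‖ ^ 2 / (1 - ‖φ z‖ ^ 2) ^ 2) ∂nA) *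
        eDNormSq f := by
  have hfd : DifferentiableOn ℂ f uD := hf.1.1
  have hfN : eDNormSq f ≠ ⊤ := hf.1.2.ne
  rw [eDNormSq_eq (compOp φ f)]
  have hz : compOp φ f 0 = 0 := by simp [compOp, h0, hf.2]
  rw [hz]
  simp only [norm_zero, ne_eq, OfNat.ofNat_ne_zero, not_false_eq_true, zero_pow,
    ENNReal.ofReal_zero, zero_add]
  rw [mul_assoc, mul_left_comm, ← lintegral_mul_const' _ _
    (ENNReal.mul_ne_top (by simp) hfN)]
  refine setLIntegral_mono' measurableSet_ball fun z hz => ?_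
  have hφz : φ z ∈ uD := hφ.2 hz
  have hchain : deriv (compOp φ f) z = deriv f (φ z) * deriv φ z :=
    deriv_comp z (hfd.differentiableAt (isOpen_ball.mem_nhds hφz))
      (hφ.1.differentiableAt (isOpen_ball.mem_nhds hz))
  rw [hchain, norm_mul, mul_pow, ENNReal.ofReal_mul (by positivity)]
  calc ENNReal.ofReal (‖deriv f (φ z)‖ ^ 2) * ENNReal.ofReal (‖deriv φ z‖ ^ 2)
      ≤ ENNReal.ofReal (4 / (1 - ‖φ z‖ ^ 2) ^ 2) * eDNormSq f *
          ENNReal.ofReal (‖deriv φ z‖ ^ 2) := by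
        gcongr
        exact deriv_sq_le hfd hφz
    _ = ENNReal.ofReal (‖deriv φ z‖ ^ 2 / (1 - ‖φ z‖ ^ 2) ^ 2) * (4 * eDNormSq f) := by
        rw [mul_right_comm, ← ENNReal.ofReal_mul (by positivity), ← mul_assoc,
          show (4 : ℝ≥0∞) = ENNReal.ofReal 4 by simp, ← ENNReal.ofReal_mul (by positivity)]
        ring_nf

/-- The Hilbert–Schmidt sum over the basis `zⁿ/√n` equals the integral, by monotone convergence
and `∑ (n + 1) xⁿ = 1 / (1 - x)²` at `x = |φ(z)|²`. -/
lemma tsum_eDNormSq_eq {φ : ℂ → ℂ} (hφ : IsSchur φ) (h0 : φ 0 = 0) :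
    ∑' n : ℕ, eDNormSq (fun z => φ z ^ (n + 1) / (Real.sqrt (n + 1) : ℂ)) =
      ∫⁻ z in uD, ENNReal.ofReal (‖deriv φ z‖ ^ 2 / (1 - ‖φ z‖ ^ 2) ^ 2) ∂nA := by
  simp only [eDNormSq_eq, h0]
  simp only [ne_eq, Nat.add_eq_zero_iff, one_ne_zero, and_false, not_false_eq_true, zero_pow,
    zero_div, norm_zero, OfNat.ofNat_ne_zero, ENNReal.ofReal_zero, zero_add]
  rw [← lintegral_tsum fun n =>
    ((measurable_deriv _).norm.pow_const 2).ennreal_ofReal.aemeasurable]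
  refine setLIntegral_congr_fun measurableSet_ball fun z hz => ?_
  have hφz : ‖φ z‖ < 1 := by simpa [uD] using hφ.2 hz
  have hdz : DifferentiableAt ℂ φ z := hφ.1.differentiableAt (isOpen_ball.mem_nhds hz)
  have hterm : ∀ n : ℕ, ‖deriv (fun z => φ z ^ (n + 1) / (Real.sqrt (n + 1) : ℂ)) z‖ ^ 2 =
      ‖deriv φ z‖ ^ 2 * (((n + 1).choose 1 : ℝ) * (‖φ z‖ ^ 2) ^ n) := fun n => by
    rw [((hdz.hasDerivAt.fun_pow (n + 1)).div_const _).deriv]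
    have hn : (0 : ℝ) < n + 1 := by positivity
    have hnn : ‖(n : ℂ) + 1‖ = n + 1 := by
      exact_mod_cast Complex.norm_natCast (n + 1)
    simp only [norm_div, norm_mul, norm_pow, Nat.cast_add, Nat.cast_one, hnn,
      add_tsub_cancel_right, Complex.norm_real, Real.norm_eq_abs, Nat.choose_one_right,
      div_pow, mul_pow, sq_abs, Real.sq_sqrt hn.le]
    field_simp
    ring
  have hsum := (hasSum_choose_mul_geometric_of_norm_lt_one (𝕜 := ℝ) 1 (r := ‖φ z‖ ^ 2) (by
    rw [Real.norm_of_nonneg (by positivity)]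
    exact pow_lt_one₀ (norm_nonneg _) hφz two_ne_zero)).mul_left (‖deriv φ z‖ ^ 2)
  simp only [hterm]
  rw [← ENNReal.ofReal_tsum_of_nonneg (fun n => by positivity) hsum.summable, hsum.tsum_eq]
  ring_nf

/- STATEMENT 1 -/
theorem stmt1 (φ : ℂ → ℂ) (hφ : IsSchur φ) (h0 : φ 0 = 0) (hmem : MemDStar φ) :
    HilbertSchmidtOnDStar φ ↔
      (∫⁻ z in uD, ENNReal.ofReal (‖deriv φ z‖ ^ 2 / (1 - ‖φ z‖ ^ 2) ^ 2) ∂nA) < ⊤ := by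
  have hsum := tsum_eDNormSq_eq hφ h0
  constructor
  · rintro ⟨-, h⟩
    rw [hsum] at h
    exact h.lt_top
  · intro h
    refine ⟨⟨fun f hf => ⟨⟨?_, ?_⟩, ?_⟩, ?_⟩, ?_⟩
    · exact DifferentiableOn.comp hf.1.1 hφ.1 hφ.2
    · exact (eDNormSq_comp_le hφ h0 hf).trans_lt
        (ENNReal.mul_lt_top (ENNReal.mul_lt_top (by simp) h) hf.1.2)
    · simp [compOp, h0, hf.2]
    · -- The operator norm is at most the square root of `4 ∫ |φ'|² / (1 - |φ|²)²`.
      refine ne_top_of_le_ne_top (b := (4 * ∫⁻ z in uD, ENNReal.ofReal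
        (‖deriv φ z‖ ^ 2 / (1 - ‖φ z‖ ^ 2) ^ 2) ∂nA) ^ ((1 : ℝ) / 2)) ?_ (sInf_le ?_)
      · exact ENNReal.rpow_ne_top_of_nonneg (by norm_num) (ENNReal.mul_ne_top (by simp) h.ne)
      · intro f hf
        rw [← ENNReal.rpow_natCast, ← ENNReal.rpow_mul]
        norm_num
        exact eDNormSq_comp_le hφ h0 hf
    · rw [hsum]
      exact h.ne

end
end

section
/- Let φ be a Schur function with φ(0) = 0 such that C_φ is a compact operator on 𝒟_*. Then for every p > 0, C_φ belongs to the Schatten class S_p(H²) on the Hardy space and to the Schatten class S_p(𝔅²) on the Bergman space. -/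
/-!
The Hardy norms of the powers `φⁿ` decay faster than any power of `n`; truncating Taylor series
then gives finite rank approximations of `C_φ` with superpolynomially small error.

The decay comes from the test functions `F_t(w) = exp (-t √(1 - ζ w))`, `|ζ| = 1` (`testG`). Their
Dirichlet integrals are at most `1` and their Taylor coefficients tend to zero as `t → ∞`, both
uniformly in `ζ`, so `F_t - F_t(0)` tends weakly to zero in `𝒟_*`, and compactness forces the
Dirichlet integrals of `F_t ∘ φ` to tend to zero uniformly in `ζ` (`dirInt_comp_testG_small`). The
Littlewood–Paley estimate and the bound for point evaluations on `H²` give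
`‖F²‖² ≤ |F(0)|⁴ + 8 ‖F‖² ∫_D |F′|² dA` in the Hardy norm (`hardy_sq_le`). As `F_{2t} = F_t²`, each
doubling of `t` multiplies the squared Hardy norm of `F_t ∘ φ` by an arbitrarily small factor, up to
an exponentially small term, so this norm decays faster than any power of `t` along `t = 2 ^ j`
(`hardy_testG_decay`).

About `8 k²` points `ζ` suffice for every `w` within `k⁻²` of the circle to satisfy
`|F_k(w)|² ≥ e⁻³` for one of them, while `|w|²ⁿ ≤ exp (-n / k²)` for all other `w`
(`pow_le_testG_sum`). With `k` of order `n ^ (1 / 4)`, this bounds the Hardy norm of `φⁿ`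
(`hardy_pow_decay`).

Cauchy–Schwarz bounds the Hardy norm of the remainder of `f ∘ φ` after the terms of degree less than
`n` by the Bergman norm of `f` times a superpolynomially small factor. Since the Bergman norm is
dominated by the Hardy norm, this treats both spaces at once (`memSchattenOn_of_le`).
-/

open Complex MeasureTheory Metric Set Filter Topology
open scoped ENNReal NNReal

noncomputable section

/-! ### Parseval's identity -/

/-- An `ℓ²` expansion in an orthonormal family satisfies Parseval's identity. -/
lemma orthonormal_hasSum_norm_sq {E : Type*} [NormedAddCommGroup E] [InnerProductSpace ℂ E]
    {v : ℕ → E} (hv : Orthonormal ℂ v) {b : ℕ → ℂ} {x : E}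
    (hx : HasSum (fun n => b n • v n) x) : HasSum (fun n => ‖b n‖ ^ 2) (‖x‖ ^ 2) := by
  have h1 : ∀ m, inner ℂ (v m) x = b m := by
    intro m
    have h := hx.mapL (innerSL ℂ (v m))
    have h2 : HasSum (fun n => innerSL ℂ (v m) (b n • v n)) (b m) := by
      convert hasSum_ite_eq m (b m) using 2 with n
      simp only [innerSL_apply_apply, inner_smul_right, orthonormal_iff_ite.1 hv]
      by_cases hn : n = m
      · simp [hn]
      · simp [hn, Ne.symm hn]
    exact h.unique h2
  have h := hx.mapL (innerSL ℂ x)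
  have h3 : HasSum (fun n => ((‖b n‖ ^ 2 : ℝ) : ℂ)) ((‖x‖ ^ 2 : ℝ) : ℂ) := by
    have e1 : ∀ n, innerSL ℂ x (b n • v n) = ((‖b n‖ ^ 2 : ℝ) : ℂ) := by
      intro n
      rw [innerSL_apply_apply, inner_smul_right, ← inner_conj_symm, h1, Complex.mul_conj,
        Complex.normSq_eq_norm_sq]
    have e2 : innerSL ℂ x x = ((‖x‖ ^ 2 : ℝ) : ℂ) := by
      rw [innerSL_apply_apply, inner_self_eq_norm_sq_to_K]; simp
    simp_rw [e1, e2] at h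
    exact h
  exact_mod_cast h3

/-- The period of the circle on which Fourier series are taken is positive. -/
instance factTwoPi : Fact (0 < 2 * Real.pi) := ⟨Real.two_pi_pos⟩

/-- Parseval's identity on a period, for an absolutely convergent one-sided Fourier series. -/
lemma parseval_Ioc (b : ℕ → ℂ) (hb : Summable fun n => ‖b n‖) (s : ℝ) :
    ∫⁻ t in Ioc s (s + 2 * Real.pi),
        ENNReal.ofReal (‖∑' n, b n * Complex.exp (t * Complex.I) ^ n‖ ^ 2) =
      ENNReal.ofReal (2 * Real.pi) * ∑' n, ENNReal.ofReal (‖b n‖ ^ 2) := by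
  set T := 2 * Real.pi with hT
  let e : ℕ → C(AddCircle T, ℂ) := fun n => fourier (n : ℤ)
  have hsum : Summable (fun n => b n • e n) := by
    refine Summable.of_norm ?_
    simpa [e, norm_smul, fourier_norm] using hb
  set F : C(AddCircle T, ℂ) := ∑' n, b n • e n with hF
  have hFsum : HasSum (fun n => b n • e n) F := hsum.hasSum
  let Λ := ContinuousMap.toLp (E := ℂ) 2 (AddCircle.haarAddCircle (T := T)) ℂ
  have h1 : HasSum (fun n => b n • (fourierLp (T := T) 2 (n : ℤ))) (Λ F) := by
    have := hFsum.mapL Λ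
    simpa [Λ, e, fourierLp] using this
  have hort : Orthonormal ℂ (fun n : ℕ => fourierLp (T := T) 2 (n : ℤ)) :=
    orthonormal_fourier.comp _ Nat.cast_injective
  have h2 := orthonormal_hasSum_norm_sq hort h1
  have h3 : ∀ t : ℝ, F (t : AddCircle T) = ∑' n, b n * Complex.exp (t * Complex.I) ^ n := by
    intro t
    have := (hFsum.mapL (ContinuousMap.evalCLM ℂ (t : AddCircle T))).tsum_eq
    rw [ContinuousMap.evalCLM_apply] at this
    rw [← this]
    congr 1; ext n
    simp only [map_smul, ContinuousMap.evalCLM_apply, e, fourier_coe_apply, smul_eq_mul]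
    rw [← Complex.exp_nat_mul]
    congr 2
    have : (Real.pi : ℂ) ≠ 0 := by exact_mod_cast Real.pi_ne_zero
    simp [hT]; field_simp
  have h4 : ∫⁻ t in Ioc s (s + T), ENNReal.ofReal (‖F (t : AddCircle T)‖ ^ 2) =
      ∫⁻ x : AddCircle T, ENNReal.ofReal (‖F x‖ ^ 2) :=
    AddCircle.lintegral_preimage T s (fun x => ENNReal.ofReal (‖F x‖ ^ 2))
  simp_rw [← h3]
  rw [h4, AddCircle.volume_eq_smul_haarAddCircle, lintegral_smul_measure, smul_eq_mul]
  congr 1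
  rw [← ENNReal.ofReal_tsum_of_nonneg (fun n => by positivity) h2.summable, h2.tsum_eq,
    ENNReal.ofReal_pow (norm_nonneg _), ofReal_norm, Lp.enorm_def,
    eLpNorm_congr_ae (ContinuousMap.coeFn_toLp (𝕜 := ℂ) _ F)]
  have := eLpNorm_nnreal_pow_eq_lintegral (f := F) (μ := AddCircle.haarAddCircle (T := T))
    (p := 2) (by norm_num)
  norm_num at this
  rw [this]
  congr 1; ext x
  rw [ENNReal.ofReal_pow (norm_nonneg _), ofReal_norm]

/-! ### Power series on the disk -/

/-- `f` is the sum on the unit disk of the power series with coefficients `a`. -/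
def IsPS (a : ℕ → ℂ) (f : ℂ → ℂ) : Prop := ∀ z ∈ uD, HasSum (fun n => a n * z ^ n) (f z)

/-- The Taylor coefficients of `f` at the origin. -/
def taylorC (f : ℂ → ℂ) (n : ℕ) : ℂ := iteratedDeriv n f 0 / n.factorial

lemma isPS_taylorC {f : ℂ → ℂ} (hf : DifferentiableOn ℂ f uD) : IsPS (taylorC f) f := by
  intro z hz
  have := Complex.hasSum_taylorSeries_on_ball hf hz
  have e : (fun n => taylorC f n * z ^ n) =
      fun n : ℕ => (n.factorial : ℂ)⁻¹ • (z - 0) ^ n • iteratedDeriv n f 0 := by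
    ext n
    simp only [taylorC, sub_zero, smul_eq_mul]
    ring
  rw [e]
  exact this

lemma IsPS.summable {a : ℕ → ℂ} {f : ℂ → ℂ} (h : IsPS a f) {r : ℝ} (h0 : 0 ≤ r) (h1 : r < 1) :
    Summable fun n => ‖a n‖ * r ^ n := by
  have : (r : ℂ) ∈ uD := by simp [uD, abs_of_nonneg h0, h1]
  have := (h _ this).summable.norm
  simpa [abs_of_nonneg h0] using this

lemma IsPS.hasFPowerSeriesOnBall {a : ℕ → ℂ} {f : ℂ → ℂ} (h : IsPS a f) :
    HasFPowerSeriesOnBall f (FormalMultilinearSeries.ofScalars ℂ a) 0 1 := by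
  refine ⟨?_, one_pos, ?_⟩
  · refine ENNReal.le_of_forall_nnreal_lt fun r hr => ?_
    apply FormalMultilinearSeries.le_radius_of_summable_norm
    have hr' : (r : ℝ) < 1 := by exact_mod_cast hr
    refine (h.summable r.2 hr').congr fun n => ?_
    rw [FormalMultilinearSeries.ofScalars_norm]
    rfl
  · intro y hy
    have hy' : y ∈ uD := by
      rw [uD, ← Metric.eball_ofReal]; simpa using hy
    have := h y hy'
    simpa [FormalMultilinearSeries.ofScalars_apply_eq, zero_add, mul_comm] using this

lemma isOpen_uD : IsOpen uD := isOpen_ball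

lemma IsPS.differentiableOn {a : ℕ → ℂ} {f : ℂ → ℂ} (h : IsPS a f) :
    DifferentiableOn ℂ f uD := by
  have := h.hasFPowerSeriesOnBall.differentiableOn
  rwa [← ENNReal.ofReal_one, Metric.eball_ofReal] at this

lemma IsPS.eq_taylorC {a : ℕ → ℂ} {f : ℂ → ℂ} (h : IsPS a f) : a = taylorC f := by
  have h1 := h.hasFPowerSeriesOnBall.hasFPowerSeriesAt
  have h2 := h1.analyticAt.hasFPowerSeriesAt
  exact (FormalMultilinearSeries.ofScalars_series_eq_iff ℂ a _).1 (h1.eq_formalMultilinearSeries h2)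

lemma IsPS.deriv {a : ℕ → ℂ} {f : ℂ → ℂ} (h : IsPS a f) :
    IsPS (fun n => (n + 1) * a (n + 1)) (deriv f) := by
  have h1 := isPS_taylorC (h.differentiableOn.deriv isOpen_uD)
  convert h1 using 1
  ext n
  rw [h.eq_taylorC, taylorC, taylorC, iteratedDeriv_succ', Nat.factorial_succ]
  have : (n.factorial : ℂ) ≠ 0 := by exact_mod_cast n.factorial_ne_zero
  have : (n + 1 : ℂ) ≠ 0 := by exact_mod_cast n.succ_ne_zero
  push_cast
  field_simp

/-- Parseval's identity on the circle of radius `r`, with the period starting at an arbitrary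
point. -/
lemma IsPS.circle {a : ℕ → ℂ} {f : ℂ → ℂ} (h : IsPS a f) {r : ℝ} (h0 : 0 ≤ r) (h1 : r < 1)
    (s : ℝ) :
    ∫⁻ t in Ioc s (s + 2 * Real.pi), ENNReal.ofReal (‖f (r * Complex.exp (t * Complex.I))‖ ^ 2) =
      ENNReal.ofReal (2 * Real.pi) *
        ∑' n, ENNReal.ofReal (‖a n‖ ^ 2) * ENNReal.ofReal (r ^ (2 * n)) := by
  have hs : Summable fun n => ‖a n * (r : ℂ) ^ n‖ := by
    simpa [abs_of_nonneg h0] using h.summable h0 h1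
  have := parseval_Ioc _ hs s
  convert this using 4 with t
  · have hz : (r * Complex.exp (t * Complex.I) : ℂ) ∈ uD := by
      simp [uD, Complex.norm_exp_ofReal_mul_I, abs_of_nonneg h0, h1]
    rw [← (h _ hz).tsum_eq]
    simp_rw [mul_pow, mul_assoc]
  · rename_i n
    rw [← ENNReal.ofReal_mul (by positivity)]
    congr 1
    rw [norm_mul, mul_pow, norm_pow, Complex.norm_real, Real.norm_eq_abs, abs_of_nonneg h0]
    ring

/-- The Hardy norm is the `ℓ²` norm of the Taylor coefficients. -/
lemma IsPS.hardy {a : ℕ → ℂ} {f : ℂ → ℂ} (h : IsPS a f) :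
    eHardyNormSq f = ∑' n, ENNReal.ofReal (‖a n‖ ^ 2) := by
  have hc : ENNReal.ofReal (2 * Real.pi) ≠ 0 := by simp [Real.pi_pos]
  have e : ∀ r : Set.Ico (0 : ℝ) 1, (∫⁻ t in Set.Ioc 0 (2 * Real.pi),
      ENNReal.ofReal (‖f ((r : ℝ) * Complex.exp (t * Complex.I))‖ ^ 2)) /
        ENNReal.ofReal (2 * Real.pi) =
        ∑' n, ENNReal.ofReal (‖a n‖ ^ 2) * ENNReal.ofReal ((r : ℝ) ^ (2 * n)) := by
    intro r
    have := h.circle r.2.1 r.2.2 0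
    rw [zero_add] at this
    rw [this, mul_comm, ENNReal.mul_div_cancel_right hc ENNReal.ofReal_ne_top]
  unfold eHardyNormSq
  simp_rw [e]
  apply le_antisymm
  · refine iSup_le fun r => ENNReal.tsum_le_tsum fun n => ?_
    calc _ ≤ ENNReal.ofReal (‖a n‖ ^ 2) * 1 := by
          gcongr
          exact ENNReal.ofReal_le_one.2 (pow_le_one₀ r.2.1 r.2.2.le)
      _ = _ := mul_one _
  · rw [ENNReal.tsum_eq_iSup_sum]
    refine iSup_le fun S => ?_
    have ht : Tendsto (fun r : ℝ => ∑ n ∈ S, ENNReal.ofReal (‖a n‖ ^ 2) *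
        ENNReal.ofReal (r ^ (2 * n))) (𝓝[<] 1) (𝓝 (∑ n ∈ S, ENNReal.ofReal (‖a n‖ ^ 2))) := by
      refine tendsto_finsetSum _ fun n _ => ?_
      have : Tendsto (fun r : ℝ => ENNReal.ofReal (‖a n‖ ^ 2 * r ^ (2 * n))) (𝓝[<] 1)
          (𝓝 (ENNReal.ofReal (‖a n‖ ^ 2 * 1 ^ (2 * n)))) := by
        refine (Continuous.tendsto ?_ 1).mono_left nhdsWithin_le_nhds
        exact ENNReal.continuous_ofReal.comp (by fun_prop)
      simp only [one_pow, mul_one] at this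
      refine this.congr fun r => ?_
      rw [ENNReal.ofReal_mul (by positivity)]
    refine le_of_tendsto ht ?_
    have hev : ∀ᶠ r : ℝ in 𝓝[<] 1, r ∈ Ioo (0 : ℝ) 1 :=
      Ioo_mem_nhdsLT one_pos
    filter_upwards [hev] with r hr
    exact (ENNReal.sum_le_tsum S).trans
      (le_iSup (fun r : Set.Ico (0 : ℝ) 1 => ∑' n, ENNReal.ofReal (‖a n‖ ^ 2) *
        ENNReal.ofReal ((r : ℝ) ^ (2 * n))) ⟨r, hr.1.le, hr.2⟩)

/-- Integration in polar coordinates of `|f|²` against a radial weight. -/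
lemma IsPS.area {a : ℕ → ℂ} {f : ℂ → ℂ} (h : IsPS a f) {w : ℝ → ℝ≥0∞} (hw : Measurable w) :
    ∫⁻ z in uD, w ‖z‖ * ENNReal.ofReal (‖f z‖ ^ 2) ∂nA =
      ∑' n, ENNReal.ofReal (‖a n‖ ^ 2) *
        ∫⁻ r in Ioo (0 : ℝ) 1, w r * ENNReal.ofReal (2 * r ^ (2 * n + 1)) := by
  classical
  have hmU : MeasurableSet uD := isOpen_uD.measurableSet
  set g : ℂ → ℂ := uD.piecewise f (fun _ => 0) with hg
  have hgm : Measurable g :=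
    h.differentiableOn.continuousOn.measurable_piecewise continuousOn_const hmU
  have e1 : ∫⁻ z in uD, w ‖z‖ * ENNReal.ofReal (‖f z‖ ^ 2) =
      ∫⁻ z, w ‖z‖ * ENNReal.ofReal (‖g z‖ ^ 2) := by
    rw [← lintegral_indicator hmU]
    congr 1; ext z
    by_cases hz : z ∈ uD <;> simp [hg, hz]
  have hpi : ENNReal.ofReal Real.pi ≠ 0 := by simp [Real.pi_pos]
  have hc : (fun p : ℝ × ℝ => Complex.polarCoord.symm p) =
      fun p => (p.1 : ℂ) * Complex.exp (p.2 * Complex.I) := by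
    ext p; rw [Complex.polarCoord_symm_apply, Complex.exp_mul_I]; simp
  have hm : Measurable (fun p : ℝ × ℝ => ENNReal.ofReal p.1 *
      (w ‖(p.1 : ℂ) * Complex.exp (p.2 * Complex.I)‖ *
        ENNReal.ofReal (‖g ((p.1 : ℂ) * Complex.exp (p.2 * Complex.I))‖ ^ 2))) := by
    have : Measurable fun p : ℝ × ℝ => (p.1 : ℂ) * Complex.exp (p.2 * Complex.I) := by fun_prop
    have h1 := hw.comp this.norm
    have h2 := ((hgm.comp this).norm.pow_const 2).ennreal_ofReal
    exact (measurable_fst.ennreal_ofReal).mul (h1.mul h2)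
  have key : ∀ r ∈ Ioi (0 : ℝ), ∫⁻ t in Ioo (-Real.pi) Real.pi, ENNReal.ofReal r *
      (w ‖(r : ℂ) * Complex.exp (t * Complex.I)‖ *
        ENNReal.ofReal (‖g ((r : ℂ) * Complex.exp (t * Complex.I))‖ ^ 2)) =
      (Ioo (0 : ℝ) 1).indicator (fun r => ENNReal.ofReal Real.pi *
        ∑' n, ENNReal.ofReal (‖a n‖ ^ 2) * (w r * ENNReal.ofReal (2 * r ^ (2 * n + 1)))) r := by
    intro r hr
    have hr0 : 0 < r := hr
    have hn : ∀ t : ℝ, ‖(r : ℂ) * Complex.exp (t * Complex.I)‖ = r := by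
      intro t; simp [Complex.norm_exp_ofReal_mul_I, abs_of_pos hr0]
    simp_rw [hn]
    by_cases hr1 : r < 1
    · rw [indicator_of_mem (show r ∈ Ioo (0 : ℝ) 1 from ⟨hr0, hr1⟩)]
      have hgf : ∀ t : ℝ, g ((r : ℂ) * Complex.exp (t * Complex.I)) =
          f ((r : ℂ) * Complex.exp (t * Complex.I)) := by
        intro t
        have : (r : ℂ) * Complex.exp (t * Complex.I) ∈ uD := by
          rw [uD, mem_ball_zero_iff, hn]; exact hr1
        simp [hg, this]
      simp_rw [hgf, ← mul_assoc]
      have hcirc := h.circle hr0.le hr1 (-Real.pi)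
      rw [show -Real.pi + 2 * Real.pi = Real.pi by ring] at hcirc
      have hcont : Measurable fun t : ℝ =>
          ENNReal.ofReal (‖f ((r : ℂ) * Complex.exp (t * Complex.I))‖ ^ 2) := by
        simp_rw [← hgf]
        have : Measurable fun t : ℝ => (r : ℂ) * Complex.exp (t * Complex.I) := by fun_prop
        exact ((hgm.comp this).norm.pow_const 2).ennreal_ofReal
      rw [lintegral_const_mul _ hcont, restrict_Ioo_eq_restrict_Ioc, hcirc,
        ← ENNReal.tsum_mul_left, ← ENNReal.tsum_mul_left, ← ENNReal.tsum_mul_left]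
      congr 1; ext n
      rw [ENNReal.ofReal_mul two_pos.le, ENNReal.ofReal_mul two_pos.le,
        pow_succ r (2 * n), ENNReal.ofReal_mul (show 0 ≤ r ^ (2 * n) by positivity)]
      ring
    · rw [indicator_of_notMem (fun hh => hr1 hh.2)]
      have hgf : ∀ t : ℝ, g ((r : ℂ) * Complex.exp (t * Complex.I)) = 0 := by
        intro t
        have : (r : ℂ) * Complex.exp (t * Complex.I) ∉ uD := by
          rw [uD, mem_ball_zero_iff, hn]; exact hr1
        simp [hg, this]
      simp [hgf]
  rw [nA, Measure.restrict_smul, lintegral_smul_measure, e1, ← Complex.lintegral_comp_polarCoord_symm]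
  have e2 : ∫⁻ p in polarCoord.target, ENNReal.ofReal p.1 •
        (w ‖Complex.polarCoord.symm p‖ * ENNReal.ofReal (‖g (Complex.polarCoord.symm p)‖ ^ 2)) =
      ENNReal.ofReal Real.pi * ∑' n, ENNReal.ofReal (‖a n‖ ^ 2) *
        ∫⁻ r in Ioo (0 : ℝ) 1, w r * ENNReal.ofReal (2 * r ^ (2 * n + 1)) := by
    have hc' := fun p => congrFun hc p
    simp only [smul_eq_mul] at hc' ⊢
    simp_rw [hc']
    rw [polarCoord_target, Measure.volume_eq_prod, setLIntegral_prod _ hm.aemeasurable,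
      setLIntegral_congr_fun measurableSet_Ioi key, lintegral_indicator measurableSet_Ioo,
      Measure.restrict_restrict measurableSet_Ioo,
      inter_eq_left.2 (show Ioo (0 : ℝ) 1 ⊆ Ioi 0 from Ioo_subset_Ioi_self)]
    have hmm : ∀ n : ℕ, Measurable fun r : ℝ => w r * ENNReal.ofReal (2 * r ^ (2 * n + 1)) := by
      intro n
      refine hw.mul (Measurable.ennreal_ofReal ?_)
      fun_prop
    rw [lintegral_const_mul _ (Measurable.tsum fun n => (hmm n).const_mul _),
      lintegral_tsum fun n => ((hmm n).const_mul _).aemeasurable]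
    congr 2; ext n
    rw [lintegral_const_mul _ (hmm n)]
  rw [e2, smul_eq_mul, ← mul_assoc, ENNReal.inv_mul_cancel hpi ENNReal.ofReal_ne_top, one_mul]

/-! ### Hardy, Bergman and Dirichlet norms -/

/-- The Dirichlet integral `∫_D |f′|² dA`. -/
def dirInt (f : ℂ → ℂ) : ℝ≥0∞ := ∫⁻ z in uD, ENNReal.ofReal (‖deriv f z‖ ^ 2) ∂nA

lemma eDNormSq_eq_s4 (f : ℂ → ℂ) : eDNormSq f = ENNReal.ofReal (‖f 0‖ ^ 2) + dirInt f := by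
  simp [eDNormSq, eDNormSqW, dirInt]

lemma lintegral_Ioo_ofReal {g : ℝ → ℝ} (hg : Continuous g) (h0 : ∀ r ∈ Ioo (0 : ℝ) 1, 0 ≤ g r) :
    ∫⁻ r in Ioo (0 : ℝ) 1, ENNReal.ofReal (g r) = ENNReal.ofReal (∫ r in (0 : ℝ)..1, g r) := by
  rw [intervalIntegral.integral_of_le zero_le_one, integral_Ioc_eq_integral_Ioo,
    ofReal_integral_eq_lintegral_ofReal]
  · exact (hg.integrableOn_Icc).mono_set Ioo_subset_Icc_self
  · exact (ae_restrict_mem measurableSet_Ioo).mono h0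

lemma radial_one (n : ℕ) : ∫⁻ r in Ioo (0 : ℝ) 1, ENNReal.ofReal (2 * r ^ (2 * n + 1)) =
    ENNReal.ofReal (1 / (n + 1)) := by
  rw [lintegral_Ioo_ofReal (by fun_prop) (fun r hr => by have := hr.1; positivity)]
  congr 1
  rw [intervalIntegral.integral_const_mul, integral_pow]
  push_cast
  field_simp
  simp
  ring

lemma radial_two (n : ℕ) : ∫⁻ r in Ioo (0 : ℝ) 1,
    ENNReal.ofReal (1 - r ^ 2) * ENNReal.ofReal (2 * r ^ (2 * n + 1)) =
    ENNReal.ofReal (1 / ((n + 1) * (n + 2))) := by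
  have e : ∀ r ∈ Ioo (0 : ℝ) 1, ENNReal.ofReal (1 - r ^ 2) * ENNReal.ofReal (2 * r ^ (2 * n + 1)) =
      ENNReal.ofReal (2 * r ^ (2 * n + 1) - 2 * r ^ (2 * n + 3)) := by
    intro r hr
    rw [← ENNReal.ofReal_mul (by nlinarith [hr.1, hr.2])]
    congr 1; ring
  rw [setLIntegral_congr_fun measurableSet_Ioo e, lintegral_Ioo_ofReal (by fun_prop)]
  · congr 1
    rw [intervalIntegral.integral_sub (by apply Continuous.intervalIntegrable; fun_prop)
      (by apply Continuous.intervalIntegrable; fun_prop),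
      intervalIntegral.integral_const_mul, integral_pow, intervalIntegral.integral_const_mul,
      integral_pow]
    push_cast
    have h1 : (2 * (n : ℝ) + 1 + 1) ≠ 0 := by positivity
    have h2 : (2 * (n : ℝ) + 3 + 1) ≠ 0 := by positivity
    field_simp
    simp
    ring
  · intro r hr
    have h1 : r ^ (2 * n + 3) = r ^ (2 * n + 1) * r ^ 2 := by ring
    have h2 : 0 ≤ r ^ (2 * n + 1) := pow_nonneg hr.1.le _
    have h3 : r ^ 2 ≤ 1 := by nlinarith [hr.1, hr.2]
    rw [h1]; nlinarith

/-- The Bergman norm in terms of the Taylor coefficients. -/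
lemma IsPS.berg {a : ℕ → ℂ} {f : ℂ → ℂ} (h : IsPS a f) :
    eBergNormSq f = ∑' n, ENNReal.ofReal (‖a n‖ ^ 2) * ENNReal.ofReal (1 / (n + 1)) := by
  have := h.area (w := fun _ => 1) measurable_const
  simp only [one_mul, radial_one] at this
  exact this

lemma berg_le_hardy {f : ℂ → ℂ} (hf : DifferentiableOn ℂ f uD) :
    eBergNormSq f ≤ eHardyNormSq f := by
  rw [(isPS_taylorC hf).berg, (isPS_taylorC hf).hardy]
  refine ENNReal.tsum_le_tsum fun n => ?_
  calc _ ≤ ENNReal.ofReal (‖taylorC f n‖ ^ 2) * 1 := by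
        gcongr
        rw [ENNReal.ofReal_le_one, div_le_one (by positivity)]
        linarith [(Nat.cast_nonneg n : (0 : ℝ) ≤ n)]
    _ = _ := mul_one _

/-- The Dirichlet integral in terms of the Taylor coefficients. -/
lemma IsPS.dirInt {a : ℕ → ℂ} {f : ℂ → ℂ} (h : IsPS a f) :
    dirInt f = ∑' n : ℕ, ENNReal.ofReal ((n + 1) * ‖a (n + 1)‖ ^ 2) := by
  have := h.deriv.area (w := fun _ => 1) measurable_const
  simp only [one_mul, radial_one] at this
  rw [_root_.dirInt, this]
  congr 1; ext n
  rw [← ENNReal.ofReal_mul (by positivity)]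
  congr 1
  rw [norm_mul, mul_pow, show ((n : ℂ) + 1) = ((n + 1 : ℕ) : ℂ) by push_cast; ring,
    Complex.norm_natCast]
  push_cast
  field_simp

/-- The Littlewood–Paley upper estimate of the Hardy norm. -/
lemma hardy_le_area {f : ℂ → ℂ} (hf : DifferentiableOn ℂ f uD) :
    eHardyNormSq f ≤ ENNReal.ofReal (‖f 0‖ ^ 2) + 2 *
      ∫⁻ z in uD, ENNReal.ofReal (1 - ‖z‖ ^ 2) * ENNReal.ofReal (‖deriv f z‖ ^ 2) ∂nA := by
  have h := isPS_taylorC hf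
  have h2 := h.deriv.area (w := fun r => ENNReal.ofReal (1 - r ^ 2)) (by fun_prop)
  simp only [radial_two] at h2
  rw [h2, h.hardy, tsum_eq_zero_add' ENNReal.summable, ← ENNReal.tsum_mul_left]
  have h0 : taylorC f 0 = f 0 := by simp [taylorC]
  rw [h0]
  gcongr with n
  rw [← ENNReal.ofReal_mul (by positivity), ← ENNReal.ofReal_ofNat 2,
    ← ENNReal.ofReal_mul two_pos.le]
  apply ENNReal.ofReal_le_ofReal
  rw [norm_mul, mul_pow, show ((n : ℂ) + 1) = ((n + 1 : ℕ) : ℂ) by push_cast; ring,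
    Complex.norm_natCast]
  push_cast
  have hx : 0 ≤ ‖taylorC f (n + 1)‖ ^ 2 := by positivity
  have : 2 * (((n : ℝ) + 1) ^ 2 * ‖taylorC f (n + 1)‖ ^ 2 * (1 / ((n + 1) * (n + 2)))) =
      ‖taylorC f (n + 1)‖ ^ 2 * (2 * (n + 1) / (n + 2)) := by field_simp
  rw [this]
  refine le_mul_of_one_le_right hx ?_
  rw [one_le_div (by positivity)]
  linarith [(Nat.cast_nonneg n : (0 : ℝ) ≤ n)]

lemma ennreal_cauchy_schwarz (x y : ℕ → ℝ≥0∞) :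
    (∑' n, x n * y n) ^ 2 ≤ (∑' n, x n ^ 2) * ∑' n, y n ^ 2 := by
  have := ENNReal.lintegral_mul_le_Lp_mul_Lq (Measure.count : Measure ℕ)
    (Real.HolderConjugate.two_two) (f := x) (g := y) (measurable_of_countable _).aemeasurable
    (measurable_of_countable _).aemeasurable
  simp only [lintegral_count, Pi.mul_apply] at this
  calc _ ≤ _ := pow_le_pow_left' this 2
    _ = _ := by
      rw [mul_pow, ← ENNReal.rpow_natCast, ← ENNReal.rpow_natCast, ← ENNReal.rpow_mul,
        ← ENNReal.rpow_mul]
      norm_num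

lemma cauchy_schwarz_tsum (a b : ℕ → ℂ) :
    ENNReal.ofReal (‖∑' n, a n * b n‖ ^ 2) ≤
      (∑' n, ENNReal.ofReal (‖a n‖ ^ 2)) * ∑' n, ENNReal.ofReal (‖b n‖ ^ 2) := by
  have e : ∀ c : ℂ, ENNReal.ofReal (‖c‖ ^ 2) = ‖c‖ₑ ^ 2 := fun c => by
    rw [ENNReal.ofReal_pow (norm_nonneg _), ofReal_norm]
  simp_rw [e]
  refine le_trans ?_ (ennreal_cauchy_schwarz _ _)
  refine pow_le_pow_left' ?_ 2
  refine enorm_tsum_le_tsum_enorm.trans (le_of_eq ?_)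
  simp_rw [enorm_mul]

/-- Point evaluations on the Hardy space: `|f(z)|² (1 - |z|²) ≤ ‖f‖²`. -/
lemma hardy_point {f : ℂ → ℂ} (hf : DifferentiableOn ℂ f uD) {z : ℂ} (hz : z ∈ uD) :
    ENNReal.ofReal (‖f z‖ ^ 2) * ENNReal.ofReal (1 - ‖z‖ ^ 2) ≤ eHardyNormSq f := by
  have h := isPS_taylorC hf
  have hz1 : ‖z‖ < 1 := by simpa [uD] using hz
  have hz2 : ‖z‖ ^ 2 < 1 := by nlinarith [norm_nonneg z]
  rw [← (h z hz).tsum_eq, h.hardy]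
  refine (mul_le_mul_left (cauchy_schwarz_tsum _ _) _).trans (le_of_eq ?_)
  have e : ∑' n, ENNReal.ofReal (‖z ^ n‖ ^ 2) = ENNReal.ofReal ((1 - ‖z‖ ^ 2)⁻¹) := by
    rw [← tsum_geometric_of_lt_one (by positivity) hz2, ENNReal.ofReal_tsum_of_nonneg
      (fun n => by positivity) (summable_geometric_of_lt_one (by positivity) hz2)]
    congr 1; ext n; rw [norm_pow]; congr 1; ring
  rw [e, mul_assoc, ← ENNReal.ofReal_mul (by rw [inv_nonneg]; linarith),
    inv_mul_cancel₀ (by linarith)]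
  simp

/-- Squaring a function gains a factor of its Dirichlet integral in the Hardy norm. -/
lemma hardy_sq_le {F : ℂ → ℂ} (hF : DifferentiableOn ℂ F uD) :
    eHardyNormSq (fun z => F z ^ 2) ≤
      ENNReal.ofReal (‖F 0‖ ^ 4) + 8 * eHardyNormSq F * dirInt F := by
  refine (hardy_le_area (hF.pow 2)).trans ?_
  have e0 : ‖F 0 ^ 2‖ ^ 2 = ‖F 0‖ ^ 4 := by rw [norm_pow]; ring
  simp only [Pi.pow_apply]
  rw [e0]
  have hm : AEMeasurable (fun z => ENNReal.ofReal (‖deriv F z‖ ^ 2)) (nA.restrict uD) := by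
    have : Measurable (deriv F) := measurable_deriv F
    fun_prop
  have h1 : ∫⁻ z in uD, ENNReal.ofReal (1 - ‖z‖ ^ 2) *
      ENNReal.ofReal (‖deriv (fun z => F z ^ 2) z‖ ^ 2) ∂nA ≤
      4 * eHardyNormSq F * dirInt F := by
    rw [dirInt, ← lintegral_const_mul'' _ hm]
    refine setLIntegral_mono' isOpen_uD.measurableSet fun z hz => ?_
    have hd : HasDerivAt F (deriv F z) z :=
      (hF.differentiableAt (isOpen_uD.mem_nhds hz)).hasDerivAt
    have hd2 : deriv (fun z => F z ^ 2) z = 2 * F z * deriv F z := by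
      have := (hd.fun_pow 2).deriv
      simpa using this
    rw [hd2]
    have e1 : ENNReal.ofReal (‖2 * F z * deriv F z‖ ^ 2) =
        4 * (ENNReal.ofReal (‖F z‖ ^ 2) * ENNReal.ofReal (‖deriv F z‖ ^ 2)) := by
      rw [← ENNReal.ofReal_mul (by positivity), ← ENNReal.ofReal_ofNat 4,
        ← ENNReal.ofReal_mul (by norm_num)]
      congr 1
      rw [norm_mul, norm_mul, Complex.norm_ofNat]
      ring
    rw [e1]
    calc _ = 4 * (ENNReal.ofReal (‖F z‖ ^ 2) * ENNReal.ofReal (1 - ‖z‖ ^ 2)) *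
          ENNReal.ofReal (‖deriv F z‖ ^ 2) := by ring
      _ ≤ _ := by gcongr; exact hardy_point hF hz
  calc _ ≤ ENNReal.ofReal (‖F 0‖ ^ 4) + 2 * (4 * eHardyNormSq F * dirInt F) := by gcongr; exact h1
    _ = _ := by ring

lemma hardy_le_one {F : ℂ → ℂ} (h : ∀ z ∈ uD, ‖F z‖ ≤ 1) : eHardyNormSq F ≤ 1 := by
  refine iSup_le fun r => ?_
  have hc : ENNReal.ofReal (2 * Real.pi) ≠ 0 := by simp [Real.pi_pos]
  rw [ENNReal.div_le_iff hc ENNReal.ofReal_ne_top, one_mul]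
  calc _ ≤ ∫⁻ t in Ioc 0 (2 * Real.pi), (1 : ℝ≥0∞) := by
        refine lintegral_mono fun t => ?_
        rw [ENNReal.ofReal_le_one]
        refine pow_le_one₀ (norm_nonneg _) (h _ ?_)
        simp [uD, Complex.norm_exp_ofReal_mul_I, abs_of_nonneg r.2.1, r.2.2]
    _ = _ := by simp

/-! ### Test functions -/

/-- The test function `exp (-t √(1 - ζ w))`, concentrated near the boundary point `ζ̄` at
scale `t⁻²` when `‖ζ‖ = 1`. -/
def testG (t : ℝ) (ζ w : ℂ) : ℂ := Complex.exp (-(t * (1 - ζ * w) ^ (1 / 2 : ℂ)))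

lemma sqrt_sq (u : ℂ) : (u ^ (1 / 2 : ℂ)) ^ 2 = u := by
  rw [← Complex.cpow_nat_mul]
  simp

lemma norm_sqrt_sq (u : ℂ) : ‖u ^ (1 / 2 : ℂ)‖ ^ 2 = ‖u‖ := by
  rw [← norm_pow, sqrt_sq]

lemma re_sqrt_nonneg {u : ℂ} (hu : 0 < u.re) : 0 ≤ (u ^ (1 / 2 : ℂ)).re := by
  have hne : u ≠ 0 := fun h => by simp [h] at hu
  rw [Complex.cpow_def_of_ne_zero hne, Complex.exp_re]
  refine mul_nonneg (Real.exp_pos _).le (Real.cos_nonneg_of_mem_Icc ?_)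
  have h1 := Complex.neg_pi_lt_arg u
  have h2 := Complex.arg_le_pi u
  have : (Complex.log u * (1 / 2)).im = u.arg / 2 := by
    rw [show (1 / 2 : ℂ) = ((1 / 2 : ℝ) : ℂ) by push_cast; ring, Complex.im_mul_ofReal,
      Complex.log_im]
    ring
  rw [this]
  constructor <;> linarith

/-- On the right half-plane the principal square root takes values in the sector
`|arg| ≤ π/4`. -/
lemma sqrt_half_le_re {u : ℂ} (hu : 0 < u.re) : √(‖u‖ / 2) ≤ (u ^ (1 / 2 : ℂ)).re := by
  apply Real.sqrt_le_iff.2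
  refine ⟨re_sqrt_nonneg hu, ?_⟩
  set s := u ^ (1 / 2 : ℂ) with hs
  have h1 : s.re * s.re - s.im * s.im = u.re := by
    rw [← sqrt_sq u, ← hs, pow_two, Complex.mul_re]
  have h2 : s.re * s.re + s.im * s.im = ‖u‖ := by
    rw [← norm_sqrt_sq, ← hs, ← Complex.normSq_eq_norm_sq, Complex.normSq_apply]
  nlinarith

lemma re_sqrt_le (u : ℂ) : (u ^ (1 / 2 : ℂ)).re ≤ √‖u‖ := by
  apply Real.le_sqrt_of_sq_le
  rw [← norm_sqrt_sq]
  exact sq_le_sq' (neg_le_of_abs_le (Complex.abs_re_le_norm _)) (Complex.re_le_norm _)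

lemma re_one_sub_pos {ζ w : ℂ} (hζ : ‖ζ‖ = 1) (hw : w ∈ uD) : 0 < (1 - ζ * w).re := by
  have hw1 : ‖w‖ < 1 := by simpa [uD] using hw
  have := Complex.re_le_norm (ζ * w)
  rw [norm_mul, hζ, one_mul] at this
  simp only [Complex.sub_re, Complex.one_re]
  linarith

lemma norm_testG (t : ℝ) (ζ w : ℂ) :
    ‖testG t ζ w‖ = Real.exp (-(t * ((1 - ζ * w) ^ (1 / 2 : ℂ)).re)) := by
  rw [testG, Complex.norm_exp, Complex.neg_re, Complex.re_ofReal_mul]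

lemma norm_testG_le {t : ℝ} (ht : 0 ≤ t) {ζ w : ℂ} (hζ : ‖ζ‖ = 1) (hw : w ∈ uD) :
    ‖testG t ζ w‖ ≤ Real.exp (-(t * √(‖1 - ζ * w‖ / 2))) := by
  rw [norm_testG]
  have := sqrt_half_le_re (re_one_sub_pos hζ hw)
  gcongr

lemma norm_testG_le_one {t : ℝ} (ht : 0 ≤ t) {ζ w : ℂ} (hζ : ‖ζ‖ = 1) (hw : w ∈ uD) :
    ‖testG t ζ w‖ ≤ 1 := by
  refine (norm_testG_le ht hζ hw).trans ?_
  rw [Real.exp_le_one_iff]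
  have : 0 ≤ t * √(‖1 - ζ * w‖ / 2) := by positivity
  linarith

lemma le_norm_testG {t : ℝ} (ht : 0 ≤ t) (ζ w : ℂ) :
    Real.exp (-(t * √‖1 - ζ * w‖)) ≤ ‖testG t ζ w‖ := by
  rw [norm_testG]
  have := re_sqrt_le (1 - ζ * w)
  gcongr

lemma testG_two_mul (t : ℝ) (ζ w : ℂ) : testG (2 * t) ζ w = testG t ζ w ^ 2 := by
  rw [testG, testG, ← Complex.exp_nat_mul]
  congr 1
  push_cast; ring

lemma testG_zero (t : ℝ) (ζ : ℂ) : testG t ζ 0 = Complex.exp (-t) := by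
  simp [testG]

lemma hasDerivAt_testG (t : ℝ) {ζ w : ℂ} (hζ : ‖ζ‖ = 1) (hw : w ∈ uD) :
    HasDerivAt (testG t ζ) (testG t ζ w * (t * ζ * (2 * (1 - ζ * w) ^ (1 / 2 : ℂ))⁻¹)) w := by
  have hu := re_one_sub_pos hζ hw
  have hne : 1 - ζ * w ≠ 0 := fun h => by simp [h] at hu
  have h1 : HasDerivAt (fun w => 1 - ζ * w) (-ζ) w := by
    simpa using ((hasDerivAt_id w).const_mul ζ).const_sub 1
  have h2 := h1.cpow_const (c := (1 / 2 : ℂ)) (Or.inl hu)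
  have h3 := ((h2.const_mul (t : ℂ)).neg).cexp
  refine h3.congr_deriv ?_
  have e : (1 - ζ * w) ^ ((1 / 2 : ℂ) - 1) = ((1 - ζ * w) ^ (1 / 2 : ℂ))⁻¹ := by
    rw [← Complex.cpow_neg]; norm_num
  simp only [testG, Pi.neg_apply]
  rw [e, mul_inv]
  ring

lemma differentiableOn_testG (t : ℝ) {ζ : ℂ} (hζ : ‖ζ‖ = 1) :
    DifferentiableOn ℂ (testG t ζ) uD := fun _ hw =>
  (hasDerivAt_testG t hζ hw).differentiableAt.differentiableWithinAt

lemma lintegral_radial {g : ℝ → ℝ≥0∞} (hg : Measurable g) :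
    ∫⁻ z : ℂ, g ‖z‖ = ENNReal.ofReal (2 * Real.pi) * ∫⁻ r in Ioi (0 : ℝ), ENNReal.ofReal r * g r := by
  rw [← Complex.lintegral_comp_polarCoord_symm, polarCoord_target, Measure.volume_eq_prod]
  have e : ∀ p ∈ Ioi (0 : ℝ) ×ˢ Ioo (-Real.pi) Real.pi,
      ENNReal.ofReal p.1 • g ‖Complex.polarCoord.symm p‖ = ENNReal.ofReal p.1 * g p.1 := by
    intro p hp
    rw [Complex.norm_polarCoord_symm, abs_of_pos hp.1, smul_eq_mul]
  rw [setLIntegral_congr_fun (measurableSet_Ioi.prod measurableSet_Ioo) e, setLIntegral_prod]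
  · have hm : Measurable fun r => ENNReal.ofReal r * g r := by fun_prop
    simp only [setLIntegral_const, Real.volume_Ioo]
    rw [lintegral_mul_const _ hm, mul_comm]
    congr 2
    ring
  · exact Measurable.aemeasurable (by fun_prop)

/-- The squared modulus of the derivative is dominated by a radial function about `ζ⁻¹`, whose
integral over the whole plane does not depend on `t`. -/
lemma dirInt_testG_le {t : ℝ} (ht : 0 < t) {ζ : ℂ} (hζ : ‖ζ‖ = 1) :
    dirInt (testG t ζ) ≤ 1 := by
  set g : ℝ → ℝ≥0∞ := fun r => ENNReal.ofReal (t ^ 2 / (4 * r) * Real.exp (-(√2 * t * r ^ (1 / 2 : ℝ))))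
    with hg
  have hgm : Measurable g := by
    apply Measurable.ennreal_ofReal; fun_prop
  have hζ0 : ζ ≠ 0 := fun h => by simp [h] at hζ
  have hn : ∀ w, ‖1 - ζ * w‖ = ‖w - ζ⁻¹‖ := by
    intro w
    have : 1 - ζ * w = ζ * (ζ⁻¹ - w) := by field_simp
    rw [this, norm_mul, hζ, one_mul, norm_sub_rev]
  have h1 : ∀ w ∈ uD, ENNReal.ofReal (‖deriv (testG t ζ) w‖ ^ 2) ≤ g ‖w - ζ⁻¹‖ := by
    intro w hw
    rw [(hasDerivAt_testG t hζ hw).deriv, ← hn, hg]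
    apply ENNReal.ofReal_le_ofReal
    have hb := norm_testG_le ht.le hζ hw
    have e1 : ‖testG t ζ w * (t * ζ * (2 * (1 - ζ * w) ^ (1 / 2 : ℂ))⁻¹)‖ ^ 2 =
        t ^ 2 / (4 * ‖1 - ζ * w‖) * ‖testG t ζ w‖ ^ 2 := by
      rw [norm_mul, norm_mul, norm_mul, norm_inv, norm_mul, hζ, mul_pow, mul_pow, mul_pow, inv_pow,
        mul_pow, norm_sqrt_sq]
      simp
      field_simp
      ring
    have e2 : Real.exp (-(√2 * t * ‖1 - ζ * w‖ ^ (1 / 2 : ℝ))) =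
        Real.exp (-(t * √(‖1 - ζ * w‖ / 2))) ^ 2 := by
      rw [← Real.exp_nat_mul, ← Real.sqrt_eq_rpow, Real.sqrt_div (norm_nonneg _)]
      congr 1
      have : √2 * √2 = 2 := Real.mul_self_sqrt two_pos.le
      field_simp
      push_cast
      linear_combination (-√‖1 - ζ * w‖) * this
    rw [e1, e2]
    gcongr
  have h2 : ∫⁻ r in Ioi (0 : ℝ), ENNReal.ofReal r * g r = ENNReal.ofReal (1 / 4) := by
    have e : ∀ r ∈ Ioi (0 : ℝ), ENNReal.ofReal r * g r =
        ENNReal.ofReal (t ^ 2 / 4 * Real.exp (-(√2 * t) * r ^ (1 / 2 : ℝ))) := by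
      intro r hr
      have hr0 : 0 < r := hr
      rw [hg, ← ENNReal.ofReal_mul hr0.le]
      congr 1
      field_simp
    have hI : ∫ r in Ioi (0 : ℝ), Real.exp (-(√2 * t) * r ^ (1 / 2 : ℝ)) = 1 / t ^ 2 := by
      rw [_root_.integral_exp_neg_mul_rpow (p := 1 / 2) (by norm_num) (by positivity)]
      have : (1 / (1 / 2) + 1 : ℝ) = 2 + 1 := by norm_num
      rw [this, show (2 + 1 : ℝ) = ((2 : ℕ) : ℝ) + 1 by norm_num, Real.Gamma_nat_eq_factorial,
        show (-1 / (1 / 2) : ℝ) = -((2 : ℕ) : ℝ) by norm_num, Real.rpow_neg (by positivity),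
        Real.rpow_natCast, mul_pow, Real.sq_sqrt two_pos.le]
      norm_num [Nat.factorial]
      field_simp
    have hexpInt : IntegrableOn (fun r => Real.exp (-(√2 * t) * r ^ (1 / 2 : ℝ))) (Ioi 0) := by
      by_contra hcon
      have := integral_undef hcon
      rw [hI] at this
      have : 0 < 1 / t ^ 2 := by positivity
      linarith
    rw [setLIntegral_congr_fun measurableSet_Ioi e, ← ofReal_integral_eq_lintegral_ofReal
      (hexpInt.const_mul _) (ae_of_all _ fun r => by positivity), integral_const_mul, hI]
    congr 1
    field_simp
  calc dirInt (testG t ζ) ≤ ∫⁻ w in uD, g ‖w - ζ⁻¹‖ ∂nA :=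
        setLIntegral_mono' isOpen_uD.measurableSet h1
    _ ≤ ∫⁻ w, g ‖w - ζ⁻¹‖ ∂nA := setLIntegral_le_lintegral _ _
    _ = (ENNReal.ofReal Real.pi)⁻¹ * (ENNReal.ofReal (2 * Real.pi) * ENNReal.ofReal (1 / 4)) := by
      rw [nA, lintegral_smul_measure, smul_eq_mul,
        lintegral_sub_right_eq_self (fun w : ℂ => g ‖w‖), lintegral_radial hgm, h2]
    _ ≤ 1 := by
      rw [← ENNReal.ofReal_inv_of_pos Real.pi_pos, ← ENNReal.ofReal_mul (by positivity),
        ← ENNReal.ofReal_mul (by positivity), ENNReal.ofReal_le_one]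
      have := Real.pi_pos
      field_simp
      norm_num

/-- The Taylor coefficients of the test functions tend to zero as `t → ∞`, uniformly in `ζ`. -/
lemma taylorC_testG_le {t : ℝ} (ht : 0 ≤ t) {ζ : ℂ} (hζ : ‖ζ‖ = 1) (n : ℕ) :
    ‖taylorC (testG t ζ) n‖ ≤ 2 ^ n * Real.exp (-(t / 2)) := by
  have hb : ∀ z ∈ sphere (0 : ℂ) (1 / 2), ‖testG t ζ z‖ ≤ Real.exp (-(t / 2)) := by
    intro z hz
    have hz2 : ‖z‖ = 1 / 2 := by simpa using hz
    have hzD : z ∈ uD := by rw [uD, mem_ball_zero_iff, hz2]; norm_num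
    refine (norm_testG_le ht hζ hzD).trans ?_
    have h1 : 1 / 2 ≤ ‖1 - ζ * z‖ := by
      have := norm_sub_norm_le 1 (ζ * z)
      rw [norm_mul, hζ, hz2, norm_one] at this
      linarith
    have h2 : 1 / 2 ≤ √(‖1 - ζ * z‖ / 2) := by
      apply Real.le_sqrt_of_sq_le
      linarith
    rw [Real.exp_le_exp]
    nlinarith
  have hd : DiffContOnCl ℂ (testG t ζ) (ball 0 (1 / 2)) := by
    apply DifferentiableOn.diffContOnCl_ball (U := uD) (differentiableOn_testG t hζ)
    exact closedBall_subset_ball (by norm_num)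
  have := Complex.norm_iteratedDeriv_le_of_forall_mem_sphere_norm_le n (by norm_num) hd hb
  rw [taylorC, norm_div, Complex.norm_natCast, div_le_iff₀ (by positivity)]
  refine this.trans (le_of_eq ?_)
  field_simp
  rw [← mul_pow]
  norm_num

/-! ### Compactness on the Dirichlet space -/

/-- If a seminorm-like function `q` is at most `η ‖·‖` on the kernel of a finite rank linear map
(which need not be continuous), then `limsup q (c i) ≤ η` along families in the unit ball
which converge weakly to zero. -/
lemma eventually_le_of_weak {H E ι : Type*} [NormedAddCommGroup H] [InnerProductSpace ℂ H]
    [CompleteSpace H] [AddCommGroup E] [Module ℂ E] {q : H → ℝ} {M η : ℝ} (hM0 : 0 ≤ M)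
    (hη0 : 0 ≤ η) (hadd : ∀ x y, q (x + y) ≤ q x + q y) (hM : ∀ x, q x ≤ M * ‖x‖)
    (S : H →ₗ[ℂ] E) [FiniteDimensional ℂ (LinearMap.range S)]
    (hη : ∀ x, S x = 0 → q x ≤ η * ‖x‖) {l : Filter ι} {c : ι → H}
    (hc : ∀ᶠ i in l, ‖c i‖ ≤ 1)
    (hw : ∀ e : H, Tendsto (fun i => inner ℂ e (c i)) l (𝓝 0)) {δ : ℝ} (hδ : 0 < δ) :
    ∀ᶠ i in l, q (c i) ≤ η + δ := by
  -- By continuity the bound on the kernel extends to its closure `K`, whose orthogonal complement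
  -- is finite dimensional, so that the projections of `c i` onto it tend to zero in norm.
  set V := LinearMap.ker S with hV
  set K := V.topologicalClosure with hK
  have hcl : IsClosed (K : Set H) := V.isClosed_topologicalClosure
  have : CompleteSpace K := hcl.completeSpace_coe
  have hqK : ∀ x ∈ K, q x ≤ η * ‖x‖ := by
    intro x hx
    refine le_of_forall_pos_le_add fun ε hε => ?_
    have hx' : x ∈ closure (V : Set H) := hx
    obtain ⟨v, hv, hd⟩ := Metric.mem_closure_iff.1 hx' (ε / (η + M + 1)) (by positivity)
    rw [dist_eq_norm] at hd
    have h1 := hadd v (x - v)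
    rw [add_sub_cancel] at h1
    have h2 := hη v (by simpa [hV] using hv)
    have h3 := hM (x - v)
    have h4 : ‖v‖ ≤ ‖x‖ + ‖x - v‖ := by
      have := norm_sub_norm_le v x
      rw [norm_sub_rev] at this
      linarith
    rw [lt_div_iff₀ (by positivity)] at hd
    have h5 : η * ‖v‖ ≤ η * (‖x‖ + ‖x - v‖) := by gcongr
    nlinarith [norm_nonneg (x - v)]
  have hfin : FiniteDimensional ℂ Kᗮ := by
    refine FiniteDimensional.of_injective (S.rangeRestrict ∘ₗ Kᗮ.subtype) ?_
    rw [← LinearMap.ker_eq_bot, LinearMap.ker_eq_bot']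
    intro m hm
    have hm1 : S (m : H) = 0 := congrArg Subtype.val hm
    have hm2 : (m : H) ∈ K := V.le_topologicalClosure (by simpa [hV] using hm1)
    have : (m : H) ∈ K ⊓ Kᗮ := ⟨hm2, m.2⟩
    rw [Submodule.inf_orthogonal_eq_bot] at this
    exact Subtype.ext (by simpa using this)
  have hP : Tendsto (fun i => ‖Kᗮ.starProjection (c i)‖ ^ 2) l (𝓝 0) := by
    let b := stdOrthonormalBasis ℂ Kᗮ
    have e : ∀ i, ‖Kᗮ.starProjection (c i)‖ ^ 2 = ∑ k, ‖inner ℂ ((b k : Kᗮ) : H) (c i)‖ ^ 2 := by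
      intro i
      rw [Submodule.starProjection_apply, ← Submodule.coe_norm, ← b.sum_sq_norm_inner_right]
      refine Finset.sum_congr rfl fun k _ => ?_
      rw [Submodule.inner_orthogonalProjectionOnto_eq_of_mem_left]
    simp_rw [e]
    have : Tendsto (fun i => ∑ k, ‖inner ℂ ((b k : Kᗮ) : H) (c i)‖ ^ 2) l
        (𝓝 (∑ k : Fin (Module.finrank ℂ Kᗮ), (0 : ℝ))) := by
      refine tendsto_finsetSum _ fun k _ => ?_
      simpa using (hw (b k : H)).norm.pow 2
    simpa using this
  have hlt : (0 : ℝ) < (δ / (M + 1)) ^ 2 := by positivity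
  filter_upwards [hc, hP.eventually_lt_const hlt] with i h1 h2
  have h3 := lt_of_pow_lt_pow_left₀ 2 (by positivity) h2
  rw [lt_div_iff₀ (by positivity)] at h3
  have h4 := hadd (K.starProjection (c i)) (Kᗮ.starProjection (c i))
  rw [Submodule.starProjection_add_starProjection_orthogonal] at h4
  have h5 := hqK _ (K.starProjection_apply_mem (c i))
  have h6 := hM (Kᗮ.starProjection (c i))
  have h7 : ‖K.starProjection (c i)‖ ≤ 1 := (K.norm_starProjection_apply_le (c i)).trans h1
  nlinarith [norm_nonneg (Kᗮ.starProjection (c i))]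

/-- Bounded families in `ℓ²` that converge to zero coordinatewise converge weakly to zero. -/
lemma weak_of_coord {ι : Type*} {l : Filter ι} {c : ι → lp (fun _ : ℕ => ℂ) 2}
    (hc : ∀ᶠ i in l, ‖c i‖ ≤ 1) (hw : ∀ n, Tendsto (fun i => c i n) l (𝓝 0))
    (e : lp (fun _ : ℕ => ℂ) 2) : Tendsto (fun i => inner ℂ e (c i)) l (𝓝 0) := by
  rw [Metric.tendsto_nhds]
  intro ε hε
  have h1 := lp.hasSum_single (p := 2) (by norm_num) e
  obtain ⟨s, hs⟩ := (Metric.tendsto_nhds.1 h1 (ε / 2) (by positivity)).exists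
  set e' := ∑ n ∈ s, lp.single 2 n (e n) with he'
  have h2 : Tendsto (fun i => inner ℂ e' (c i)) l (𝓝 0) := by
    simp_rw [he', sum_inner, lp.inner_single_left]
    have : Tendsto (fun i => ∑ n ∈ s, inner ℂ (e n) (c i n)) l (𝓝 (∑ n ∈ s, 0)) := by
      refine tendsto_finsetSum _ fun n _ => ?_
      simpa using (tendsto_const_nhds (x := e n)).inner (𝕜 := ℂ) (hw n)
    simpa using this
  filter_upwards [hc, Metric.tendsto_nhds.1 h2 (ε / 2) (by positivity)] with i hi1 hi2
  rw [dist_zero_right] at *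
  rw [dist_comm, dist_eq_norm] at hs
  have h3 : inner ℂ e (c i) = inner ℂ (e - e') (c i) + inner ℂ e' (c i) := by
    rw [← inner_add_left, sub_add_cancel]
  have h4 := norm_inner_le_norm (𝕜 := ℂ) (e - e') (c i)
  have h5 : ‖e - e'‖ * ‖c i‖ ≤ ‖e - e'‖ * 1 := by gcongr
  rw [h3]
  exact (norm_add_le _ _).trans_lt (by linarith)

/-- Taylor coefficients of the element of `𝒟_*` with coordinates `c` in the orthonormal
basis `z ^ (n + 1) / √(n + 1)`. -/
def dcoef (c : lp (fun _ : ℕ => ℂ) 2) : ℕ → ℂ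
  | 0 => 0
  | n + 1 => c n / (√(n + 1) : ℝ)

/-- The isometry from `ℓ²` onto `𝒟_*`; values outside the disk are set to zero so that they
too depend linearly on `c`. -/
def dirT (c : lp (fun _ : ℕ => ℂ) 2) (z : ℂ) : ℂ :=
  open Classical in if z ∈ uD then ∑' n, dcoef c n * z ^ n else 0

lemma norm_dcoef_le (c : lp (fun _ : ℕ => ℂ) 2) (n : ℕ) : ‖dcoef c n‖ ≤ ‖c‖ := by
  cases n with
  | zero => simp [dcoef]
  | succ n =>
    rw [dcoef, norm_div, Complex.norm_real, Real.norm_of_nonneg (Real.sqrt_nonneg _)]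
    refine (div_le_self (norm_nonneg _) ?_).trans (lp.norm_apply_le_norm (by norm_num) c n)
    rw [Real.one_le_sqrt]
    have : (0 : ℝ) ≤ n := n.cast_nonneg
    linarith

lemma isPS_dirT (c : lp (fun _ : ℕ => ℂ) 2) : IsPS (dcoef c) (dirT c) := by
  intro z hz
  rw [dirT, if_pos hz]
  apply Summable.hasSum
  have hz1 : ‖z‖ < 1 := by simpa [uD] using hz
  refine Summable.of_norm_bounded (g := fun n => ‖c‖ * ‖z‖ ^ n)
    ((summable_geometric_of_lt_one (norm_nonneg z) hz1).mul_left _) fun n => ?_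
  rw [norm_mul, norm_pow]
  gcongr
  exact norm_dcoef_le c n

/-- `dirT` as a linear map. -/
def dirTL : lp (fun _ : ℕ => ℂ) 2 →ₗ[ℂ] (ℂ → ℂ) where
  toFun := dirT
  map_add' c d := by
    funext z
    by_cases hz : z ∈ uD
    · refine (isPS_dirT (c + d) z hz).unique ?_
      rw [Pi.add_apply]
      convert (isPS_dirT c z hz).add (isPS_dirT d z hz) using 2 with n
      rw [← add_mul]
      cases n with
      | zero => simp [dcoef]
      | succ n => simp only [dcoef, lp.coeFn_add, Pi.add_apply, add_div]
    · simp [dirT, hz]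
  map_smul' r c := by
    funext z
    by_cases hz : z ∈ uD
    · refine (isPS_dirT (r • c) z hz).unique ?_
      rw [RingHom.id_apply, Pi.smul_apply]
      convert (isPS_dirT c z hz).const_smul r using 2 with n
      cases n with
      | zero => simp [dcoef]
      | succ n =>
        simp only [dcoef, lp.coeFn_smul, Pi.smul_apply, smul_eq_mul]
        ring
    · simp [dirT, hz]

lemma dirInt_dirT (c : lp (fun _ : ℕ => ℂ) 2) : dirInt (dirT c) = ENNReal.ofReal (‖c‖ ^ 2) := by
  rw [(isPS_dirT c).dirInt]
  have h := lp.hasSum_norm (p := 2) (by norm_num) c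
  have e : ∀ n : ℕ, ENNReal.ofReal ((n + 1) * ‖dcoef c (n + 1)‖ ^ 2) =
      ENNReal.ofReal (‖c n‖ ^ (2 : ℝ≥0∞).toReal) := by
    intro n
    congr 1
    rw [dcoef, norm_div, Complex.norm_real, Real.norm_of_nonneg (Real.sqrt_nonneg _), div_pow,
      Real.sq_sqrt (by positivity)]
    simp
    field_simp
  simp_rw [e]
  rw [← ENNReal.ofReal_tsum_of_nonneg (fun n => by positivity) h.summable, h.tsum_eq]
  simp

lemma dirT_zero (c : lp (fun _ : ℕ => ℂ) 2) : dirT c 0 = 0 := by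
  have h := isPS_dirT c 0 (by simp [uD])
  refine h.unique ?_
  convert hasSum_zero using 2 with n
  cases n <;> simp [dcoef]

lemma eDNormSq_dirT (c : lp (fun _ : ℕ => ℂ) 2) :
    eDNormSq (dirT c) = ENNReal.ofReal (‖c‖ ^ 2) := by
  rw [eDNormSq_eq_s4, dirT_zero, dirInt_dirT]; simp

lemma memDStar_dirT (c : lp (fun _ : ℕ => ℂ) 2) : MemDStar (dirT c) := by
  refine ⟨⟨(isPS_dirT c).differentiableOn, ?_⟩, dirT_zero c⟩
  change eDNormSq (dirT c) < ⊤
  rw [eDNormSq_dirT]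
  exact ENNReal.ofReal_lt_top

lemma dirInt_eq_eLpNorm (f : ℂ → ℂ) :
    dirInt f = eLpNorm (deriv f) 2 (nA.restrict uD) ^ 2 := by
  have := eLpNorm_nnreal_pow_eq_lintegral (μ := nA.restrict uD) (f := deriv f) (p := 2) (by norm_num)
  simp only [ENNReal.coe_ofNat, NNReal.coe_ofNat, ENNReal.rpow_ofNat] at this
  rw [this, dirInt]
  congr 1
  funext z
  rw [ENNReal.ofReal_pow (norm_nonneg _), ofReal_norm]

/-- The square root of the Dirichlet integral is subadditive. -/
lemma dirInt_sqrt_add_le {f g : ℂ → ℂ} (hf : DifferentiableOn ℂ f uD)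
    (hg : DifferentiableOn ℂ g uD) :
    eLpNorm (deriv (f + g)) 2 (nA.restrict uD) ≤
      eLpNorm (deriv f) 2 (nA.restrict uD) + eLpNorm (deriv g) 2 (nA.restrict uD) := by
  have e : deriv (f + g) =ᵐ[nA.restrict uD] deriv f + deriv g := by
    refine ae_restrict_of_forall_mem isOpen_uD.measurableSet fun z hz => ?_
    have h1 := (hf.differentiableAt (isOpen_uD.mem_nhds hz))
    have h2 := (hg.differentiableAt (isOpen_uD.mem_nhds hz))
    exact deriv_add h1 h2
  rw [eLpNorm_congr_ae e]
  exact eLpNorm_add_le (aestronglyMeasurable_deriv _ _) (aestronglyMeasurable_deriv _ _) (by norm_num)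

/-- The coordinates of `testG t ζ - testG t ζ 0` in `𝒟_*`; they tend to zero as `t → ∞`, uniformly
in `ζ`. -/
lemma exists_testCoord {t : ℝ} (ht : 0 < t) {ζ : ℂ} (hζ : ‖ζ‖ = 1) :
    ∃ c : lp (fun _ : ℕ => ℂ) 2, ‖c‖ ≤ 1 ∧
      (∀ n, ‖c n‖ ≤ √(n + 1) * (2 ^ (n + 1) * Real.exp (-(t / 2)))) ∧
      ∀ z ∈ uD, dirT c z = testG t ζ z - testG t ζ 0 := by
  have hps := isPS_taylorC (differentiableOn_testG t hζ)
  set a := taylorC (testG t ζ) with ha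
  have hD := dirInt_testG_le ht hζ
  rw [hps.dirInt] at hD
  have hnn : ∀ n : ℕ, 0 ≤ ((n : ℝ) + 1) * ‖a (n + 1)‖ ^ 2 := fun n => by positivity
  have hsum : Summable fun n : ℕ => ((n : ℝ) + 1) * ‖a (n + 1)‖ ^ 2 := by
    have := ENNReal.summable_toReal (hD.trans_lt ENNReal.one_lt_top).ne
    simpa only [ENNReal.toReal_ofReal (hnn _)] using this
  have e : ∀ n : ℕ, ‖((√(n + 1) : ℝ) : ℂ) * a (n + 1)‖ ^ (2 : ℝ≥0∞).toReal =
      (n + 1) * ‖a (n + 1)‖ ^ 2 := by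
    intro n
    rw [norm_mul, Complex.norm_real, Real.norm_of_nonneg (Real.sqrt_nonneg _)]
    simp [mul_pow, Real.sq_sqrt (show (0 : ℝ) ≤ n + 1 by positivity)]
  have hmem : Memℓp (fun n : ℕ => ((√(n + 1) : ℝ) : ℂ) * a (n + 1)) 2 := by
    apply memℓp_gen
    simp_rw [e]
    exact hsum
  refine ⟨⟨_, hmem⟩, ?_, ?_, ?_⟩
  · set c : lp (fun _ : ℕ => ℂ) 2 := ⟨_, hmem⟩ with hcdef
    have h1 := dirInt_dirT c
    rw [(isPS_dirT c).dirInt] at h1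
    have h2 : ENNReal.ofReal (‖c‖ ^ 2) ≤ 1 := by
      rw [← h1]
      refine le_of_eq_of_le (tsum_congr fun n => ?_) hD
      congr 3
      have : ((√(n + 1) : ℝ) : ℂ) ≠ 0 := by
        rw [Complex.ofReal_ne_zero]; positivity
      simp only [dcoef, hcdef]
      field_simp
    rw [ENNReal.ofReal_le_one] at h2
    nlinarith [norm_nonneg c]
  · intro n
    change ‖((√(n + 1) : ℝ) : ℂ) * a (n + 1)‖ ≤ _
    rw [norm_mul, Complex.norm_real, Real.norm_of_nonneg (Real.sqrt_nonneg _)]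
    gcongr
    exact taylorC_testG_le ht.le hζ (n + 1)
  · intro z hz
    set c : lp (fun _ : ℕ => ℂ) 2 := ⟨_, hmem⟩ with hcdef
    refine (isPS_dirT c z hz).unique ?_
    have ha0 : a 0 = testG t ζ 0 := by simp [ha, taylorC]
    have h1 := (hps z hz).sub (hasSum_ite_eq (0 : ℕ) (testG t ζ 0))
    refine Eq.mpr (congrArg (fun g => HasSum g _) (funext fun n => ?_)) h1
    cases n with
    | zero => simp [dcoef, ha0]
    | succ n =>
      have : ((√(n + 1) : ℝ) : ℂ) ≠ 0 := by
        rw [Complex.ofReal_ne_zero]; positivity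
      simp only [dcoef, hcdef]
      field_simp
      simp

lemma exists_of_eOpNorm_lt {Mem : (ℂ → ℂ) → Prop} {NSq : (ℂ → ℂ) → ℝ≥0∞}
    {T : (ℂ → ℂ) → ℂ → ℂ} {b : ℝ≥0∞} (h : eOpNorm Mem NSq T < b) :
    ∀ f, Mem f → NSq (T f) ≤ b ^ 2 * NSq f := by
  obtain ⟨C, hC, hCb⟩ := sInf_lt_iff.1 h
  intro f hf
  exact (hC f hf).trans (by gcongr)

/-- Compactness of `C_φ` on `𝒟_*` makes the Dirichlet integrals of the composed test functions
tend to zero, uniformly in `ζ`. -/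
lemma dirInt_comp_testG_small {φ : ℂ → ℂ} (hφ : IsSchur φ)
    (hc : IsCompactOpOn MemDStar eDNormSq (compOp φ)) {ε : ℝ} (hε : 0 < ε) :
    ∃ t₀ : ℝ, ∀ t, t₀ ≤ t → ∀ ζ : ℂ, ‖ζ‖ = 1 →
      dirInt (fun z => testG t ζ (φ z)) ≤ ENNReal.ofReal (ε ^ 2) := by
  have hdiff : ∀ c, DifferentiableOn ℂ (compOp φ (dirT c)) uD := fun c =>
    ((isPS_dirT c).differentiableOn).comp hφ.1 hφ.2
  set Q : lp (fun _ : ℕ => ℂ) 2 → ℝ≥0∞ :=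
    fun c => eLpNorm (deriv (compOp φ (dirT c))) 2 (nA.restrict uD) with hQ
  have hQle : ∀ (b : ℝ) c, 0 ≤ b →
      eDNormSq (compOp φ (dirT c)) ≤ ENNReal.ofReal b ^ 2 * eDNormSq (dirT c) →
      Q c ≤ ENNReal.ofReal (b * ‖c‖) := by
    intro b c hb h
    rw [eDNormSq_dirT, eDNormSq_eq_s4, dirInt_eq_eLpNorm] at h
    have h2 := le_add_self.trans h
    rw [ENNReal.ofReal_pow (norm_nonneg _), ← mul_pow, ← ENNReal.ofReal_mul hb] at h2
    exact (ENNReal.pow_le_pow_left_iff two_ne_zero).1 h2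
  obtain ⟨M, hM0, hM⟩ : ∃ M : ℝ, 0 ≤ M ∧ ∀ c, Q c ≤ ENNReal.ofReal (M * ‖c‖) := by
    obtain ⟨b, hb1, hb2⟩ := exists_between hc.1.2.lt_top
    refine ⟨b.toReal, ENNReal.toReal_nonneg, fun c => hQle _ c ENNReal.toReal_nonneg ?_⟩
    rw [ENNReal.ofReal_toReal hb2.ne]
    exact exists_of_eOpNorm_lt hb1 _ (memDStar_dirT c)
  have hQtop : ∀ c, Q c ≠ ⊤ := fun c => ((hM c).trans_lt ENNReal.ofReal_lt_top).ne
  have hε2 : (0 : ℝ≥0∞) < ENNReal.ofReal (ε / 2) := by simpa using hε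
  obtain ⟨n, hn⟩ := (hc.2.eventually_lt_const hε2).exists
  obtain ⟨_, ⟨R, hR, rfl⟩, hRlt⟩ := sInf_lt_iff.1 hn
  have hfR : FiniteDimensional ℂ (LinearMap.range R) :=
    Module.rank_lt_aleph0_iff.1 (hR.trans (Cardinal.natCast_lt_aleph0))
  have hfS : FiniteDimensional ℂ (LinearMap.range (R ∘ₗ dirTL)) :=
    Submodule.finiteDimensional_of_le (LinearMap.range_comp_le_range dirTL R)
  have hker : ∀ c, (R ∘ₗ dirTL) c = 0 → (Q c).toReal ≤ ε / 2 * ‖c‖ := by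
    intro c h
    have h1 := exists_of_eOpNorm_lt hRlt _ (memDStar_dirT c)
    have h2 : R (dirT c) = 0 := h
    simp only [h2, Pi.zero_apply, sub_zero] at h1
    exact ENNReal.toReal_le_of_le_ofReal (by positivity) (hQle _ c (by positivity) h1)
  have hadd : ∀ c d, (Q (c + d)).toReal ≤ (Q c).toReal + (Q d).toReal := by
    intro c d
    rw [← ENNReal.toReal_add (hQtop c) (hQtop d)]
    apply ENNReal.toReal_mono (ENNReal.add_ne_top.2 ⟨hQtop c, hQtop d⟩)
    have e : compOp φ (dirT (c + d)) = compOp φ (dirT c) + compOp φ (dirT d) := by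
      funext z
      exact congrFun (dirTL.map_add c d) (φ z)
    simp only [hQ, e]
    exact dirInt_sqrt_add_le (hdiff c) (hdiff d)
  let ι := {p : ℝ × ℂ // 0 < p.1 ∧ ‖p.2‖ = 1}
  choose c hc1 hc2 hc3 using fun i : ι => exists_testCoord i.2.1 i.2.2
  -- Convergence along `l` is convergence as `t → ∞`, uniformly in `ζ`.
  let l : Filter ι := comap (fun i => i.1.1) atTop
  have hw : ∀ n, Tendsto (fun i => c i n) l (𝓝 0) := by
    intro n
    refine squeeze_zero_norm (fun i => hc2 i n) ?_
    have h1 : Tendsto (fun t : ℝ => √(n + 1) * (2 ^ (n + 1) * Real.exp (-(t / 2)))) atTop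
        (𝓝 (√(n + 1) * (2 ^ (n + 1) * 0))) := by
      refine ((Real.tendsto_exp_neg_atTop_nhds_zero.comp ?_).const_mul _).const_mul _
      exact tendsto_id.atTop_div_const two_pos
    simp only [mul_zero] at h1
    exact h1.comp tendsto_comap
  have key := eventually_le_of_weak (η := ε / 2) hM0 (by positivity) hadd
    (fun x => ENNReal.toReal_le_of_le_ofReal (by positivity) (hM x)) (R ∘ₗ dirTL) hker
    (l := l) (c := c) (Eventually.of_forall hc1)
    (weak_of_coord (Eventually.of_forall hc1) hw) (δ := ε / 2) (by positivity)
  rw [eventually_comap] at key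
  obtain ⟨t₁, ht₁⟩ := eventually_atTop.1 key
  refine ⟨max t₁ 1, fun t ht ζ hζ => ?_⟩
  have ht0 : 0 < t := lt_of_lt_of_le one_pos ((le_max_right _ _).trans ht)
  have h1 := ht₁ t ((le_max_left _ _).trans ht) ⟨(t, ζ), ht0, hζ⟩ rfl
  rw [add_halves] at h1
  have h2 : Q (c ⟨(t, ζ), ht0, hζ⟩) ≤ ENNReal.ofReal ε := by
    rw [← ENNReal.ofReal_toReal (hQtop _)]
    exact ENNReal.ofReal_le_ofReal h1
  have e : dirInt (fun z => testG t ζ (φ z)) = dirInt (compOp φ (dirT (c ⟨(t, ζ), ht0, hζ⟩))) := by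
    refine setLIntegral_congr_fun isOpen_uD.measurableSet fun z hz => ?_
    have : compOp φ (dirT (c ⟨(t, ζ), ht0, hζ⟩)) =ᶠ[𝓝 z]
        fun z => testG t ζ (φ z) - testG t ζ 0 := by
      filter_upwards [isOpen_uD.mem_nhds hz] with w hw
      exact hc3 ⟨(t, ζ), ht0, hζ⟩ (φ w) (hφ.2 hw)
    simp only [this.deriv_eq, deriv_sub_const]
  rw [e, dirInt_eq_eLpNorm, ENNReal.ofReal_pow hε.le]
  gcongr

/-! ### Decay of the powers of the symbol -/

lemma circle_mem_uD {r : ℝ} (hr : r ∈ Ico (0 : ℝ) 1) (t : ℝ) :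
    (r : ℂ) * Complex.exp (t * Complex.I) ∈ uD := by
  rw [uD, mem_ball_zero_iff, norm_mul, Complex.norm_exp_ofReal_mul_I, Complex.norm_real,
    Real.norm_of_nonneg hr.1, mul_one]
  exact hr.2

/-- Pointwise domination of `|G|²` by a weighted sum of squares passes to the Hardy norms. -/
lemma hardy_le_of_tsum {ι : Type*} [Countable ι] {G : ℂ → ℂ} {F : ι → ℂ → ℂ} {w : ι → ℝ≥0∞}
    (hF : ∀ i, DifferentiableOn ℂ (F i) uD)
    (h : ∀ z ∈ uD, ENNReal.ofReal (‖G z‖ ^ 2) ≤ ∑' i, w i * ENNReal.ofReal (‖F i z‖ ^ 2)) :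
    eHardyNormSq G ≤ ∑' i, w i * eHardyNormSq (F i) := by
  refine iSup_le fun r => ?_
  have hcont : ∀ i, Continuous fun t : ℝ => F i ((r : ℝ) * Complex.exp (t * Complex.I)) := by
    intro i
    exact (hF i).continuousOn.comp_continuous (by fun_prop) fun t => circle_mem_uD r.2 t
  have hmeas : ∀ i, Measurable fun t : ℝ =>
      ENNReal.ofReal (‖F i ((r : ℝ) * Complex.exp (t * Complex.I))‖ ^ 2) := by
    intro i
    exact ((hcont i).norm.pow 2).measurable.ennreal_ofReal
  calc _ ≤ (∫⁻ t in Set.Ioc 0 (2 * Real.pi), ∑' i, w i *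
        ENNReal.ofReal (‖F i ((r : ℝ) * Complex.exp (t * Complex.I))‖ ^ 2)) /
          ENNReal.ofReal (2 * Real.pi) := by
        gcongr with t
        exact h _ (circle_mem_uD r.2 t)
    _ = ∑' i, w i * ((∫⁻ t in Set.Ioc 0 (2 * Real.pi),
        ENNReal.ofReal (‖F i ((r : ℝ) * Complex.exp (t * Complex.I))‖ ^ 2)) /
          ENNReal.ofReal (2 * Real.pi)) := by
        rw [lintegral_tsum fun i => ((hmeas i).const_mul _).aemeasurable, div_eq_mul_inv,
          ← ENNReal.tsum_mul_right]
        refine tsum_congr fun i => ?_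
        rw [lintegral_const_mul _ (hmeas i), div_eq_mul_inv, mul_assoc]
    _ ≤ _ := by
        refine ENNReal.tsum_le_tsum fun i => ?_
        gcongr
        exact le_iSup (fun r : Set.Ico (0 : ℝ) 1 =>
          (∫⁻ t in Set.Ioc 0 (2 * Real.pi),
            ENNReal.ofReal (‖F i ((r : ℝ) * Complex.exp (t * Complex.I))‖ ^ 2)) /
              ENNReal.ofReal (2 * Real.pi)) r

lemma exp_neg_le_factorial_div {x : ℝ} (hx : 0 < x) (N : ℕ) :
    Real.exp (-x) ≤ N.factorial / x ^ N := by
  have h := Real.pow_div_factorial_le_exp x hx.le N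
  rw [Real.exp_neg, ← inv_div]
  exact inv_anti₀ (by positivity) h

/-- Squaring the test functions turns the smallness of the Dirichlet integrals into decay of the
Hardy norms faster than any power of `2 ^ j`. -/
lemma hardy_testG_decay {φ : ℂ → ℂ} (hφ : IsSchur φ) (h0 : φ 0 = 0)
    (hc : IsCompactOpOn MemDStar eDNormSq (compOp φ)) (N : ℕ) :
    ∃ C : ℝ, 0 ≤ C ∧ ∀ (j : ℕ) (ζ : ℂ), ‖ζ‖ = 1 →
      eHardyNormSq (fun z => testG (2 ^ j) ζ (φ z)) ≤ ENNReal.ofReal (C / 2 ^ (N * j)) := by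
  -- With this `ε` one squaring step multiplies the main term by at most `2⁻¹ * 2 ^ (-N)`; the
  -- constant `C` below then absorbs the term coming from the value at the origin.
  obtain ⟨t₀, ht₀⟩ := dirInt_comp_testG_small hφ hc (ε := 1 / (16 * 2 ^ N)) (by positivity)
  obtain ⟨J, hJ⟩ := pow_unbounded_of_one_lt t₀ (one_lt_two (α := ℝ))
  refine ⟨2 * N.factorial + 2 ^ (N * J), by positivity, fun j => ?_⟩
  set C : ℝ := 2 * N.factorial + 2 ^ (N * J) with hC
  have hC0 : 0 ≤ C := by positivity
  have hsmall : ∀ j ≤ J, ∀ ζ : ℂ, ‖ζ‖ = 1 →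
      eHardyNormSq (fun z => testG (2 ^ j) ζ (φ z)) ≤ ENNReal.ofReal (C / 2 ^ (N * j)) := by
    intro j hj ζ hζ
    refine (hardy_le_one fun z hz => norm_testG_le_one (by positivity) hζ (hφ.2 hz)).trans ?_
    rw [ENNReal.one_le_ofReal, le_div_iff₀ (by positivity), one_mul]
    have : (2 : ℝ) ^ (N * j) ≤ 2 ^ (N * J) :=
      pow_le_pow_right₀ one_le_two (Nat.mul_le_mul_left N hj)
    have : (0 : ℝ) ≤ 2 * N.factorial := by positivity
    linarith
  induction j with
  | zero => exact hsmall 0 (Nat.zero_le _)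
  | succ j ih =>
    rcases le_or_gt (j + 1) J with hj | hj
    · exact hsmall _ hj
    intro ζ hζ
    have hjJ : t₀ ≤ 2 ^ j := hJ.le.trans (pow_le_pow_right₀ one_le_two (by omega))
    have hd := ht₀ _ hjJ ζ hζ
    have hdiff : DifferentiableOn ℂ (fun z => testG (2 ^ j) ζ (φ z)) uD :=
      (differentiableOn_testG _ hζ).comp hφ.1 hφ.2
    have h1 := hardy_sq_le hdiff
    simp_rw [← testG_two_mul, h0, testG_zero] at h1
    rw [← pow_succ'] at h1
    have h2 : ‖Complex.exp (-((2 ^ j : ℝ) : ℂ))‖ ^ 4 ≤ N.factorial / 2 ^ (N * (j + 1)) := by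
      rw [← Complex.ofReal_neg, Complex.norm_exp_ofReal, ← Real.exp_nat_mul]
      calc Real.exp ((4 : ℕ) * -2 ^ j) ≤ Real.exp (-(2 ^ (j + 1))) := by
            rw [Real.exp_le_exp, pow_succ]
            have : (0 : ℝ) < 2 ^ j := by positivity
            push_cast; linarith
        _ ≤ N.factorial / (2 ^ (j + 1)) ^ N := exp_neg_le_factorial_div (by positivity) N
        _ = _ := by rw [← pow_mul, mul_comm N]
    refine h1.trans ?_
    calc _ ≤ ENNReal.ofReal (N.factorial / 2 ^ (N * (j + 1))) +
          8 * ENNReal.ofReal (C / 2 ^ (N * j)) * ENNReal.ofReal ((1 / (16 * 2 ^ N)) ^ 2) := by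
          gcongr
          exact ih ζ hζ
      _ = ENNReal.ofReal (N.factorial / 2 ^ (N * (j + 1)) +
          8 * (C / 2 ^ (N * j)) * (1 / (16 * 2 ^ N)) ^ 2) := by
          rw [ENNReal.ofReal_add (by positivity) (by positivity),
            ENNReal.ofReal_mul (by positivity), ENNReal.ofReal_mul (by positivity)]
          norm_num
      _ ≤ _ := by
          apply ENNReal.ofReal_le_ofReal
          have hN : (1 : ℝ) ≤ 2 ^ N := one_le_pow₀ one_le_two
          have e1 : 8 * (C / 2 ^ (N * j)) * (1 / (16 * 2 ^ N)) ^ 2 ≤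
              (C / 2) / 2 ^ (N * (j + 1)) := by
            rw [mul_add, mul_one, pow_add]
            have : (1 / (16 * 2 ^ N) : ℝ) ^ 2 ≤ 1 / (16 * 2 ^ N) := by
              rw [sq]
              refine mul_le_of_le_one_left (by positivity) ?_
              rw [div_le_one (by positivity)]
              linarith
            calc _ ≤ 8 * (C / 2 ^ (N * j)) * (1 / (16 * 2 ^ N)) := by gcongr
              _ = _ := by field_simp; ring
          have e2 : (N.factorial : ℝ) / 2 ^ (N * (j + 1)) ≤ (C / 2) / 2 ^ (N * (j + 1)) := by
            gcongr
            have : (0 : ℝ) ≤ 2 ^ (N * J) := by positivity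
            linarith
          calc _ ≤ (C / 2) / 2 ^ (N * (j + 1)) + (C / 2) / 2 ^ (N * (j + 1)) := add_le_add e2 e1
            _ = _ := by ring

/-- The boundary points at which the test functions are anchored: conjugates of points of the
circle with angular spacing `1 / k ^ 2`. -/
def anchor (k i : ℕ) : ℂ := Complex.exp (((4 - i / k ^ 2 : ℝ) : ℂ) * Complex.I)

lemma norm_anchor (k i : ℕ) : ‖anchor k i‖ = 1 := Complex.norm_exp_ofReal_mul_I _

/-- Points of the disk within `1 / k ^ 2` of the circle are detected by one of the test functions
`testG k (anchor k i)`. -/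
lemma exists_anchor {k : ℕ} (hk : 1 ≤ k) {w : ℂ} (hw : w ∈ uD) (hwk : 1 - ‖w‖ ≤ 1 / k ^ 2) :
    ∃ i < 8 * k ^ 2, Real.exp (-3) ≤ ‖testG k (anchor k i) w‖ ^ 2 := by
  have hk0 : (1 : ℝ) ≤ k := by exact_mod_cast hk
  have hw1 : ‖w‖ < 1 := by simpa [uD] using hw
  set θ := Complex.arg w with hθ
  have hpi := Real.pi_lt_d2
  have hθ1 := Complex.neg_pi_lt_arg w
  have hθ2 := Complex.arg_le_pi w
  have hx0 : 0 ≤ (θ + 4) * k ^ 2 := mul_nonneg (by linarith) (by positivity)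
  set i := ⌊(θ + 4) * k ^ 2⌋₊ with hi
  have hi1 : (i : ℝ) ≤ (θ + 4) * k ^ 2 := Nat.floor_le hx0
  have hi2 : (θ + 4) * k ^ 2 < i + 1 := Nat.lt_floor_add_one _
  refine ⟨i, ?_, ?_⟩
  · have : (i : ℝ) < 8 * k ^ 2 := by nlinarith
    exact_mod_cast this
  set s : ℝ := θ + (4 - i / k ^ 2) with hs
  have hk2 : (0 : ℝ) < k ^ 2 := by positivity
  have hs0 : 0 ≤ s := by
    have : (i : ℝ) / k ^ 2 ≤ θ + 4 := by rwa [div_le_iff₀ hk2]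
    linarith
  have hs1 : s ≤ 1 / k ^ 2 := by
    have : θ + 4 < (i + 1) / k ^ 2 := by rwa [lt_div_iff₀ hk2]
    rw [add_div] at this
    linarith
  have e : anchor k i * w = ‖w‖ * Complex.exp (Complex.I * s) := by
    conv_lhs => rw [← Complex.norm_mul_exp_arg_mul_I w]
    rw [anchor, mul_left_comm, ← Complex.exp_add, hs]
    congr 2
    push_cast
    ring
  have hdist : ‖1 - anchor k i * w‖ ≤ 2 / k ^ 2 := by
    have : 1 - anchor k i * w = ((1 - ‖w‖ : ℝ) : ℂ) - ‖w‖ * (Complex.exp (Complex.I * s) - 1) := by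
      rw [e]; push_cast; ring
    rw [this]
    refine (norm_sub_le _ _).trans ?_
    rw [Complex.norm_real, Real.norm_of_nonneg (by linarith), norm_mul, Complex.norm_real,
      norm_norm]
    have h2 := Real.norm_exp_I_mul_ofReal_sub_one_le (x := s)
    rw [Real.norm_of_nonneg hs0] at h2
    have h3 : ‖w‖ * ‖Complex.exp (Complex.I * s) - 1‖ ≤ 1 * (1 / k ^ 2) := by
      gcongr
      exact h2.trans hs1
    have : (2 : ℝ) / k ^ 2 = 1 / k ^ 2 + 1 / k ^ 2 := by ring
    linarith
  have h4 := le_norm_testG (t := k) (by positivity) (anchor k i) w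
  have h5 : (k : ℝ) * √‖1 - anchor k i * w‖ ≤ 3 / 2 := by
    have : √‖1 - anchor k i * w‖ ≤ (3 / 2) / k := by
      apply Real.sqrt_le_iff.2 ⟨by positivity, hdist.trans ?_⟩
      rw [div_pow]
      gcongr
      norm_num
    rwa [le_div_iff₀ (by positivity), mul_comm] at this
  calc Real.exp (-3) = Real.exp (-(3 / 2)) ^ 2 := by
        rw [← Real.exp_nat_mul]; norm_num
    _ ≤ _ := by
        gcongr
        refine le_trans ?_ h4
        gcongr

lemma le_sum_fin {m : ℕ} (f : ℕ → ℝ) (hf : ∀ i, 0 ≤ f i) {i : ℕ} (hi : i < m) :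
    f i ≤ ∑ i : Fin m, f i :=
  Finset.single_le_sum (f := fun i : Fin m => f i) (fun i _ => hf i) (Finset.mem_univ ⟨i, hi⟩)

/-- Either `w` is so close to the circle that one of the test functions detects it, or
`‖w‖ ≤ exp (-1 / k ^ 2)`. -/
lemma pow_le_testG_sum {k : ℕ} (hk : 1 ≤ k) {w : ℂ} (hw : w ∈ uD) (n : ℕ) :
    ‖w ^ n‖ ^ 2 ≤ Real.exp 3 * ∑ i : Fin (8 * k ^ 2), ‖testG k (anchor k i) w‖ ^ 2 +
      Real.exp (-(n / k ^ 2)) := by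
  have hw1 : ‖w‖ < 1 := by simpa [uD] using hw
  have hk0 : (1 : ℝ) ≤ k := by exact_mod_cast hk
  have hp1 : ‖w ^ n‖ ≤ 1 := by
    rw [norm_pow]; exact pow_le_one₀ (norm_nonneg _) hw1.le
  have hnn : 0 ≤ ∑ i : Fin (8 * k ^ 2), ‖testG k (anchor k i) w‖ ^ 2 :=
    Finset.sum_nonneg fun i _ => by positivity
  rcases le_or_gt (1 - ‖w‖) (1 / k ^ 2) with h | h
  · obtain ⟨i, hi, hib⟩ := exists_anchor hk hw h
    have h1 : ‖testG k (anchor k i) w‖ ^ 2 ≤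
        ∑ i : Fin (8 * k ^ 2), ‖testG k (anchor k i) w‖ ^ 2 :=
      le_sum_fin (fun i => ‖testG k (anchor k i) w‖ ^ 2) (fun i => by positivity) hi
    have h2 : 1 ≤ Real.exp 3 * ∑ i : Fin (8 * k ^ 2), ‖testG k (anchor k i) w‖ ^ 2 := by
      calc (1 : ℝ) = Real.exp 3 * Real.exp (-3) := by rw [← Real.exp_add]; norm_num
        _ ≤ _ := by gcongr; exact hib.trans h1
    have h3 := Real.exp_pos (-(n / k ^ 2 : ℝ))
    nlinarith [norm_nonneg (w ^ n)]
  · have h1 : ‖w‖ ≤ Real.exp (-(1 / k ^ 2)) := by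
      have := Real.add_one_le_exp (-(1 / k ^ 2 : ℝ))
      linarith
    have h2 : ‖w ^ n‖ ≤ Real.exp (-(n / k ^ 2)) := by
      calc ‖w ^ n‖ ≤ Real.exp (-(1 / k ^ 2)) ^ n := by rw [norm_pow]; gcongr
        _ = _ := by rw [← Real.exp_nat_mul]; congr 1; ring
    have h3 : 0 ≤ Real.exp 3 * ∑ i : Fin (8 * k ^ 2), ‖testG k (anchor k i) w‖ ^ 2 := by
      positivity
    nlinarith [norm_nonneg (w ^ n)]

/-- The Hardy norms of the powers of `φ` decay faster than any power of `n`. -/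
lemma hardy_pow_decay {φ : ℂ → ℂ} (hφ : IsSchur φ) (h0 : φ 0 = 0)
    (hc : IsCompactOpOn MemDStar eDNormSq (compOp φ)) (N : ℕ) :
    ∃ C : ℝ, 0 ≤ C ∧ ∀ n : ℕ,
      eHardyNormSq (fun z => φ z ^ n) ≤ ENNReal.ofReal (C / (n + 1) ^ N) := by
  obtain ⟨C, hC0, hC⟩ := hardy_testG_decay hφ h0 hc (4 * N + 2)
  set A : ℝ := 8 * Real.exp 3 * C + (2 * N).factorial with hA
  refine ⟨A * 16 ^ N + 1, by positivity, fun n => ?_⟩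
  rcases Nat.eq_zero_or_pos n with rfl | hn
  · refine (hardy_le_one fun z hz => by simp).trans ?_
    rw [ENNReal.one_le_ofReal]
    have : 0 ≤ A * 16 ^ N := by positivity
    simpa using this
  -- The scale `k = 2 ^ j` is chosen so that `k ^ 4 ≤ n < 16 * k ^ 4`: both `k` and `n / k ^ 2` are
  -- then at least a fixed multiple of a positive power of `n`.
  set j := Nat.log 16 n with hj
  have hj1 : 16 ^ j ≤ n := Nat.pow_log_le_self 16 hn.ne'
  have hj2 : n < 16 ^ (j + 1) := Nat.lt_pow_succ_log_self (by norm_num) n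
  set k : ℕ := 2 ^ j with hk
  have hk1 : 1 ≤ k := Nat.one_le_two_pow
  have hkR : (0 : ℝ) < k := by exact_mod_cast hk1
  have hk4 : (k : ℝ) ^ 4 ≤ n := by
    have : k ^ 4 ≤ n := by
      rw [hk, ← pow_mul, mul_comm, pow_mul]; exact hj1
    exact_mod_cast this
  have hn4 : (n : ℝ) + 1 ≤ 16 * k ^ 4 := by
    have : n + 1 ≤ 16 * k ^ 4 := by
      rw [hk, ← pow_mul, mul_comm j, pow_mul]; rw [pow_succ] at hj2; norm_num; omega
    exact_mod_cast this
  have h1 : eHardyNormSq (fun z => φ z ^ n) ≤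
      ∑' o : Option (Fin (8 * k ^ 2)),
        (o.elim (ENNReal.ofReal (Real.exp (-(n / k ^ 2)))) fun _ => ENNReal.ofReal (Real.exp 3)) *
          eHardyNormSq (o.elim (fun _ => 1) fun i z => testG k (anchor k i) (φ z)) := by
    refine hardy_le_of_tsum ?_ ?_
    · rintro (_ | i)
      · exact differentiableOn_const _
      · exact (differentiableOn_testG _ (norm_anchor _ _)).comp hφ.1 hφ.2
    · intro z hz
      rw [tsum_fintype, Fintype.sum_option]
      simp only [Option.elim]
      refine (ENNReal.ofReal_le_ofReal (pow_le_testG_sum hk1 (hφ.2 hz) n)).trans (le_of_eq ?_)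
      rw [ENNReal.ofReal_add (mul_nonneg (Real.exp_pos _).le
        (Finset.sum_nonneg fun i _ => by positivity)) (Real.exp_pos _).le, add_comm,
        ENNReal.ofReal_mul (Real.exp_pos _).le,
        ENNReal.ofReal_sum_of_nonneg (fun i _ => by positivity), Finset.mul_sum]
      simp
  have h2 : ∀ i : Fin (8 * k ^ 2), eHardyNormSq (fun z => testG k (anchor k i) (φ z)) ≤
      ENNReal.ofReal (C / k ^ (4 * N + 2)) := by
    intro i
    have := hC j (anchor k i) (norm_anchor _ _)
    rw [mul_comm (4 * N + 2) j, pow_mul] at this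
    simpa [hk] using this
  refine h1.trans ?_
  rw [tsum_fintype, Fintype.sum_option]
  simp only [Option.elim]
  calc _ ≤ ENNReal.ofReal (Real.exp (-(n / k ^ 2))) * 1 +
        ∑ i : Fin (8 * k ^ 2), ENNReal.ofReal (Real.exp 3) * ENNReal.ofReal (C / k ^ (4 * N + 2)) := by
        gcongr with i
        · exact hardy_le_one fun z hz => by simp
        · exact h2 i
    _ = ENNReal.ofReal (Real.exp (-(n / k ^ 2)) + 8 * k ^ 2 * (Real.exp 3 * (C / k ^ (4 * N + 2)))) := by
        rw [Finset.sum_const, Finset.card_univ, Fintype.card_fin, nsmul_eq_mul, mul_one,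
          ENNReal.ofReal_add (by positivity) (by positivity), ENNReal.ofReal_mul (by positivity),
          ENNReal.ofReal_mul (by positivity), ENNReal.ofReal_mul (by positivity)]
        congr 2
        rw [ENNReal.ofReal_pow (by positivity), ENNReal.ofReal_natCast]
        push_cast
        norm_num
    _ ≤ _ := by
        apply ENNReal.ofReal_le_ofReal
        have e1 : Real.exp (-(n / k ^ 2)) ≤ (2 * N).factorial / (k ^ 4) ^ N := by
          calc Real.exp (-(n / k ^ 2)) ≤ Real.exp (-(k ^ 2)) := by
                rw [Real.exp_le_exp, neg_le_neg_iff, le_div_iff₀ (by positivity)]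
                calc _ = (k : ℝ) ^ 4 := by ring
                  _ ≤ n := hk4
            _ ≤ (2 * N).factorial / (k ^ 2) ^ (2 * N) := exp_neg_le_factorial_div (by positivity) _
            _ = _ := by congr 1; ring
        have e2 : 8 * (k : ℝ) ^ 2 * (Real.exp 3 * (C / k ^ (4 * N + 2))) =
            8 * Real.exp 3 * C / (k ^ 4) ^ N := by
          rw [pow_add, pow_mul]
          field_simp
        have e3 : A / (k ^ 4) ^ N ≤ A * 16 ^ N / (n + 1) ^ N := by
          rw [div_le_div_iff₀ (by positivity) (by positivity), mul_assoc, ← mul_pow]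
          gcongr
        have e4 : (A * 16 ^ N) / (n + 1 : ℝ) ^ N ≤ (A * 16 ^ N + 1) / (n + 1) ^ N := by
          gcongr; linarith
        refine le_trans ?_ (e3.trans e4)
        rw [e2, hA, add_div, add_comm]
        gcongr

/-! ### Approximation numbers -/

/-- The Taylor coefficient functionals extend from the holomorphic functions on the disk to linear
functionals on the space of all functions. -/
lemma exists_taylorL : ∃ L : ℕ → ((ℂ → ℂ) →ₗ[ℂ] ℂ),
    ∀ j f, DifferentiableOn ℂ f uD → L j f = taylorC f j := by
  let A : Submodule ℂ (ℂ → ℂ) :=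
    { carrier := {f | DifferentiableOn ℂ f uD}
      add_mem' := fun hf hg => hf.add hg
      zero_mem' := differentiableOn_const 0
      smul_mem' := fun c _ hf => hf.const_smul c }
  have hadd : ∀ f g : A, taylorC ((f : ℂ → ℂ) + g) = taylorC f + taylorC g := by
    intro f g
    refine (IsPS.eq_taylorC ?_).symm
    intro z hz
    have := (isPS_taylorC f.2 z hz).add (isPS_taylorC g.2 z hz)
    simpa only [Pi.add_apply, add_mul] using this
  have hsmul : ∀ (c : ℂ) (f : A), taylorC (c • (f : ℂ → ℂ)) = c • taylorC f := by
    intro c f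
    refine (IsPS.eq_taylorC ?_).symm
    intro z hz
    have := (isPS_taylorC f.2 z hz).mul_left c
    simpa only [Pi.smul_apply, smul_eq_mul, mul_assoc] using this
  let T : ℕ → (A →ₗ[ℂ] ℂ) := fun j =>
    { toFun := fun f => taylorC f j
      map_add' := fun f g => congrFun (hadd f g) j
      map_smul' := fun c f => congrFun (hsmul c f) j }
  choose L hL using fun j => LinearMap.exists_extend (T j)
  exact ⟨L, fun j f hf => LinearMap.congr_fun (hL j) ⟨f, hf⟩⟩

/-- Composition with `φ` applied to the Taylor polynomial of degree less than `n`, where `L`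
supplies the coefficient functionals. -/
def taylorOp (L : ℕ → ((ℂ → ℂ) →ₗ[ℂ] ℂ)) (φ : ℂ → ℂ) (n : ℕ) : (ℂ → ℂ) →ₗ[ℂ] (ℂ → ℂ) :=
  ∑ j ∈ Finset.range n, (L j).smulRight (fun z => φ z ^ j)

lemma taylorOp_apply (L : ℕ → ((ℂ → ℂ) →ₗ[ℂ] ℂ)) (φ : ℂ → ℂ) (n : ℕ) (f : ℂ → ℂ) (z : ℂ) :
    taylorOp L φ n f z = ∑ j ∈ Finset.range n, L j f * φ z ^ j := by
  simp [taylorOp, LinearMap.sum_apply, Finset.sum_apply]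

lemma rank_taylorOp (L : ℕ → ((ℂ → ℂ) →ₗ[ℂ] ℂ)) (φ : ℂ → ℂ) (n : ℕ) :
    Module.rank ℂ (LinearMap.range (taylorOp L φ n)) < ((n + 1 : ℕ) : Cardinal) := by
  classical
  set s : Finset (ℂ → ℂ) := (Finset.range n).image fun j z => φ z ^ j with hs
  have h1 : LinearMap.range (taylorOp L φ n) ≤ Submodule.span ℂ (s : Set (ℂ → ℂ)) := by
    rintro _ ⟨f, rfl⟩
    rw [taylorOp, LinearMap.sum_apply]
    refine Submodule.sum_mem _ fun j hj => ?_
    rw [LinearMap.smulRight_apply]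
    exact Submodule.smul_mem _ _ (Submodule.subset_span (Finset.mem_image_of_mem _ hj))
  have h2 : Module.rank ℂ (LinearMap.range (taylorOp L φ n)) ≤ (n : Cardinal) := by
    refine (Submodule.rank_mono h1).trans ((rank_span_finset_le s).trans ?_)
    exact_mod_cast Finset.card_image_le.trans (Finset.card_range n).le
  refine h2.trans_lt ?_
  exact_mod_cast Nat.lt_succ_self n

/-- Pointwise Cauchy–Schwarz estimate for the Taylor remainder composed with `φ`. -/
lemma remainder_le {L : ℕ → ((ℂ → ℂ) →ₗ[ℂ] ℂ)}
    (hL : ∀ j f, DifferentiableOn ℂ f uD → L j f = taylorC f j) {φ : ℂ → ℂ} (hφ : IsSchur φ)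
    {f : ℂ → ℂ} (hf : DifferentiableOn ℂ f uD) (n : ℕ) {z : ℂ} (hz : z ∈ uD) :
    ENNReal.ofReal (‖compOp φ f z - taylorOp L φ n f z‖ ^ 2) ≤
      ∑' j : ℕ, ((∑' i : ℕ, ENNReal.ofReal (‖taylorC f i‖ ^ 2) * ENNReal.ofReal (1 / (i + 1))) *
        ENNReal.ofReal ((j + n : ℕ) + 1)) * ENNReal.ofReal (‖φ z ^ (j + n)‖ ^ 2) := by
  have h1 := isPS_taylorC hf (φ z) (hφ.2 hz)
  have h2 := (hasSum_nat_add_iff' n).2 h1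
  have e1 : compOp φ f z - taylorOp L φ n f z =
      f (φ z) - ∑ j ∈ Finset.range n, taylorC f j * φ z ^ j := by
    rw [taylorOp_apply, compOp]
    simp only [hL _ f hf]
  have hne : ∀ i : ℕ, ((√(i + 1) : ℝ) : ℂ) ≠ 0 := fun i => by
    rw [Complex.ofReal_ne_zero]; positivity
  have e2 : ∀ j : ℕ, taylorC f (j + n) * φ z ^ (j + n) =
      (taylorC f (j + n) / (√((j + n : ℕ) + 1) : ℝ)) * ((√((j + n : ℕ) + 1) : ℝ) * φ z ^ (j + n)) := by
    intro j
    have := hne (j + n)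
    field_simp
  rw [e1, ← h2.tsum_eq]
  simp_rw [e2]
  refine (cauchy_schwarz_tsum _ _).trans ?_
  simp_rw [mul_assoc]
  rw [ENNReal.tsum_mul_left]
  gcongr ?_ * ?_
  · have e3 : ∀ i : ℕ, ENNReal.ofReal (‖taylorC f i / (√(i + 1) : ℝ)‖ ^ 2) =
        ENNReal.ofReal (‖taylorC f i‖ ^ 2) * ENNReal.ofReal (1 / (i + 1)) := by
      intro i
      rw [norm_div, div_pow, Complex.norm_real, Real.norm_of_nonneg (Real.sqrt_nonneg _),
        Real.sq_sqrt (by positivity), ← ENNReal.ofReal_mul (by positivity), mul_one_div]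
    simp_rw [e3]
    exact ENNReal.tsum_comp_le_tsum_of_injective (add_left_injective n) _
  · refine ENNReal.tsum_le_tsum fun j => le_of_eq ?_
    rw [norm_mul, mul_pow, Complex.norm_real, Real.norm_of_nonneg (Real.sqrt_nonneg _),
      Real.sq_sqrt (by positivity), ENNReal.ofReal_mul (by positivity)]

lemma eOpNorm_le {Mem : (ℂ → ℂ) → Prop} {NSq : (ℂ → ℂ) → ℝ≥0∞} {T : (ℂ → ℂ) → ℂ → ℂ}
    {b : ℝ≥0∞} (h : ∀ f, Mem f → NSq (T f) ≤ b ^ 2 * NSq f) : eOpNorm Mem NSq T ≤ b :=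
  sInf_le h

lemma eApproxNum_le {Mem : (ℂ → ℂ) → Prop} {NSq : (ℂ → ℂ) → ℝ≥0∞} {T : (ℂ → ℂ) → ℂ → ℂ} {n : ℕ}
    (R : (ℂ → ℂ) →ₗ[ℂ] (ℂ → ℂ)) (hR : Module.rank ℂ (LinearMap.range R) < (n : Cardinal)) :
    eApproxNum Mem NSq T n ≤ eOpNorm Mem NSq (fun f z => T f z - R f z) :=
  sInf_le ⟨R, hR, rfl⟩

/-- The spaces `H²` and `𝔅²` are the two extreme cases: a norm lying between the Bergman and the Hardy norm sees
`C_φ` in every Schatten class. -/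
lemma memSchattenOn_of_le {φ : ℂ → ℂ} (hφ : IsSchur φ) (h0 : φ 0 = 0)
    (hc : IsCompactOpOn MemDStar eDNormSq (compOp φ)) {NSq : (ℂ → ℂ) → ℝ≥0∞}
    (hB : ∀ f, DifferentiableOn ℂ f uD → eBergNormSq f ≤ NSq f)
    (hH : ∀ f, DifferentiableOn ℂ f uD → NSq f ≤ eHardyNormSq f) {p : ℝ} (hp : 0 < p) :
    MemSchattenOn (fun f => DifferentiableOn ℂ f uD ∧ NSq f < ⊤) NSq (compOp φ) p := by
  obtain ⟨L, hL⟩ := exists_taylorL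
  have hdiff : ∀ f, DifferentiableOn ℂ f uD → DifferentiableOn ℂ (compOp φ f) uD :=
    fun f hf => hf.comp hφ.1 hφ.2
  have hpow : ∀ j, DifferentiableOn ℂ (fun z => φ z ^ j) uD := fun j => hφ.1.pow j
  have hRdiff : ∀ n f, DifferentiableOn ℂ (taylorOp L φ n f) uD := by
    intro n f
    have : taylorOp L φ n f = fun z => ∑ j ∈ Finset.range n, L j f * φ z ^ j :=
      funext fun z => taylorOp_apply L φ n f z
    rw [this]
    exact DifferentiableOn.fun_sum fun j _ => (hpow j).const_mul _
  have hsq : Summable fun j : ℕ => 1 / ((j : ℝ) + 1) ^ 2 := by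
    have := (summable_nat_add_iff 1).2 (Real.summable_one_div_nat_pow.2 one_lt_two)
    simpa using this
  have key : ∀ m : ℕ, ∃ K : ℝ, 0 ≤ K ∧ ∀ n f, DifferentiableOn ℂ f uD →
      NSq (fun z => compOp φ f z - taylorOp L φ n f z) ≤
        ENNReal.ofReal (K / (n + 1) ^ m) ^ 2 * NSq f := by
    intro m
    -- Of the exponent, `1` pays for the weight `j + n + 1`, `2` for the summation over `j`, and `2 * m`
    -- is left for the square of `(n + 1) ^ m`.
    obtain ⟨C, hC0, hC⟩ := hardy_pow_decay hφ h0 hc (2 * m + 3)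
    set S : ℝ := ∑' j : ℕ, 1 / ((j : ℝ) + 1) ^ 2 with hS
    have hS0 : 0 ≤ S := tsum_nonneg fun j => by positivity
    refine ⟨√(C * S), Real.sqrt_nonneg _, fun n f hf => ?_⟩
    refine (hH _ ((hdiff f hf).sub (hRdiff n f))).trans ?_
    refine (hardy_le_of_tsum (fun j => hpow (j + n))
      fun z hz => remainder_le hL hφ hf n hz).trans ?_
    rw [← (isPS_taylorC hf).berg]
    simp_rw [mul_assoc]
    rw [ENNReal.tsum_mul_left, mul_comm]
    gcongr
    · calc ∑' j : ℕ, ENNReal.ofReal ((j + n : ℕ) + 1) * eHardyNormSq (fun z => φ z ^ (j + n))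
          ≤ ∑' j : ℕ, ENNReal.ofReal (C / (n + 1) ^ (2 * m)) *
              ENNReal.ofReal (1 / ((j : ℝ) + 1) ^ 2) := by
            refine ENNReal.tsum_le_tsum fun j => ?_
            refine (mul_le_mul_right (hC (j + n)) _).trans ?_
            rw [← ENNReal.ofReal_mul (by positivity), ← ENNReal.ofReal_mul (by positivity)]
            apply ENNReal.ofReal_le_ofReal
            push_cast
            have hx : (0 : ℝ) < j + n + 1 := by positivity
            calc ((j : ℝ) + n + 1) * (C / (j + n + 1) ^ (2 * m + 3))
                = C / ((j + n + 1) ^ (2 * m) * (j + n + 1) ^ 2) := by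
                  rw [show 2 * m + 3 = 2 * m + 2 + 1 by ring, pow_succ, pow_add]
                  field_simp
              _ ≤ C / ((n + 1) ^ (2 * m) * (j + 1) ^ 2) := by
                  have hj : (0 : ℝ) ≤ j := j.cast_nonneg
                  have hn : (0 : ℝ) ≤ n := n.cast_nonneg
                  gcongr <;> linarith
              _ = _ := by field_simp
        _ = ENNReal.ofReal (√(C * S) / (n + 1) ^ m) ^ 2 := by
            rw [ENNReal.tsum_mul_left, ← ENNReal.ofReal_tsum_of_nonneg (fun j => by positivity) hsq,
              ← ENNReal.ofReal_mul (by positivity), ← ENNReal.ofReal_pow (by positivity), div_pow,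
              Real.sq_sqrt (by positivity), ← pow_mul, mul_comm m 2]
            congr 1
            ring
    · exact hB f hf
  refine ⟨?_, ?_⟩
  · obtain ⟨K, hK0, hK⟩ := key 0
    have hK' : ∀ f, DifferentiableOn ℂ f uD →
        NSq (compOp φ f) ≤ ENNReal.ofReal K ^ 2 * NSq f := by
      intro f hf
      simpa [taylorOp] using hK 0 f hf
    refine ⟨fun f hf => ⟨hdiff f hf.1, (hK' f hf.1).trans_lt ?_⟩, ?_⟩
    · exact ENNReal.mul_lt_top (ENNReal.pow_lt_top ENNReal.ofReal_lt_top) hf.2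
    · exact ((eOpNorm_le fun f hf => hK' f hf.1).trans_lt ENNReal.ofReal_lt_top).ne
  · obtain ⟨m, hm⟩ := exists_nat_gt (2 / p)
    rw [div_lt_iff₀ hp] at hm
    obtain ⟨K, hK0, hK⟩ := key m
    have h1 : ∀ n : ℕ, eApproxNum (fun f => DifferentiableOn ℂ f uD ∧ NSq f < ⊤) NSq (compOp φ)
        (n + 1) ≤ ENNReal.ofReal (K / (n + 1) ^ m) := by
      intro n
      refine (eApproxNum_le (taylorOp L φ n) (rank_taylorOp L φ n)).trans ?_
      exact eOpNorm_le fun f hf => hK n f hf.1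
    have h2 : ∀ n : ℕ, (eApproxNum (fun f => DifferentiableOn ℂ f uD ∧ NSq f < ⊤) NSq (compOp φ)
        (n + 1)) ^ p ≤ ENNReal.ofReal (K ^ p * (1 / ((n : ℝ) + 1) ^ 2)) := by
      intro n
      refine (ENNReal.rpow_le_rpow (h1 n) hp.le).trans ?_
      rw [ENNReal.ofReal_rpow_of_nonneg (by positivity) hp.le]
      apply ENNReal.ofReal_le_ofReal
      rw [Real.div_rpow hK0 (by positivity), ← Real.rpow_natCast, ← Real.rpow_mul (by positivity),
        div_eq_mul_one_div]
      gcongr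
      rw [← Real.rpow_natCast]
      apply Real.rpow_le_rpow_of_exponent_le
      · have hn : (0 : ℝ) ≤ n := n.cast_nonneg
        linarith
      · exact_mod_cast hm.le
    refine ((ENNReal.tsum_le_tsum h2).trans_lt ?_).ne
    rw [← ENNReal.ofReal_tsum_of_nonneg (fun j => by positivity) (hsq.mul_left _)]
    exact ENNReal.ofReal_lt_top

/- STATEMENT 4 -/
theorem stmt4 (φ : ℂ → ℂ) (hφ : IsSchur φ) (h0 : φ 0 = 0)
    (hc : IsCompactOpOn MemDStar eDNormSq (compOp φ)) (p : ℝ) (hp : 0 < p) :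
    MemSchattenOn MemHardy eHardyNormSq (compOp φ) p ∧
      MemSchattenOn MemBerg eBergNormSq (compOp φ) p := by
  exact ⟨memSchattenOn_of_le hφ h0 hc (fun _ hf => berg_le_hardy hf) (fun _ _ => le_rfl) hp,
    memSchattenOn_of_le hφ h0 hc (fun _ _ => le_rfl) (fun _ hf => berg_le_hardy hf) hp⟩

end
end
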